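/- arXiv:2207.02385 — 5 statements merged into one kernel-verified Lean document; each statement's English description precedes it below -/
import Mathlib

section
/- (Logarithmic Sobolev inequality) Let d ≥ 1 and let u : ℝ^d → ℝ be a smooth function with compact support. Then for every ε > 0, ∫_{ℝ^d} u(x)² log|u(x)| dx ≤ ε ∫_{ℝ^d} |∇u(x)|² dx + (d/4)·log(1/ε) · ∫_{ℝ^d} u(x)² dx + (∫_{ℝ^d} u(x)² dx) · log( (∫_{ℝ^d} u(x)² dx)^{1/2} ), where the integrand u(x)² log|u(x)| is interpreted as 0 at points where u(x) = 0, and the last term is interpreted as 0 when u ≡ 0. -/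
open MeasureTheory
open scoped ENNReal

lemma ls_oneD (φ : ℝ → ℝ) (hφ : ContDiff ℝ 1 φ) (hc : HasCompactSupport φ) (t : ℝ) :
    ENNReal.ofReal (φ t ^ 2) ^ 2 ≤
      4 * ((∫⁻ s, ENNReal.ofReal (φ s ^ 2)) * (∫⁻ s, ENNReal.ofReal (deriv φ s ^ 2))) := by
  have hd : Differentiable ℝ φ := hφ.differentiable one_ne_zero
  have hcd : Continuous (deriv φ) := hφ.continuous_deriv le_rfl
  have h1 : ‖φ t ^ 2‖ₑ ≤ ∫⁻ s, ‖deriv (fun s => φ s ^ 2) s‖ₑ := by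
    refine le_trans (HasCompactSupport.enorm_le_lintegral_Ici_deriv (f := fun s => φ s ^ 2)
      (hφ.pow 2) ?_ t) (lintegral_mono' Measure.restrict_le_self le_rfl)
    exact hc.comp_left (g := fun y : ℝ => y ^ 2) (by simp)
  have h2 : ∀ s, ‖deriv (fun s => φ s ^ 2) s‖ₑ = 2 * (‖φ s‖ₑ * ‖deriv φ s‖ₑ) := by
    intro s
    have : deriv (fun s => φ s ^ 2) s = 2 * (φ s * deriv φ s) := by
      have := ((hd s).hasDerivAt.pow 2).deriv
      rw [show (fun s => φ s ^ 2) = φ ^ 2 from rfl, this]; ring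
    rw [this, enorm_mul, enorm_mul]
    congr 1
    simp [Real.enorm_eq_ofReal]
  have e1 : ∀ y : ℝ, ENNReal.ofReal (y ^ 2) = ‖y‖ₑ ^ 2 := by
    intro y
    rw [← enorm_pow, Real.enorm_eq_ofReal (sq_nonneg y)]
  have h3 : ∫⁻ s, ‖φ s‖ₑ * ‖deriv φ s‖ₑ ≤
      (∫⁻ s, ‖φ s‖ₑ ^ (2:ℝ)) ^ (1 / (2:ℝ)) * (∫⁻ s, ‖deriv φ s‖ₑ ^ (2:ℝ)) ^ (1 / (2:ℝ)) :=
    ENNReal.lintegral_mul_le_Lp_mul_Lq volume Real.HolderConjugate.two_two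
      (hd.continuous.enorm.measurable.aemeasurable) (hcd.enorm.measurable.aemeasurable)
  have h4 : ENNReal.ofReal (φ t ^ 2) ≤ 2 * ∫⁻ s, ‖φ s‖ₑ * ‖deriv φ s‖ₑ := by
    rw [← Real.enorm_eq_ofReal (sq_nonneg _)]
    refine h1.trans ?_
    simp_rw [h2]
    rw [lintegral_const_mul' _ _ (by simp)]
  have e2 : ∀ A : ℝ≥0∞, (A ^ (1 / (2:ℝ))) ^ 2 = A := by
    intro A
    rw [← ENNReal.rpow_natCast, ← ENNReal.rpow_mul]; norm_num
  calc ENNReal.ofReal (φ t ^ 2) ^ 2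
      ≤ (2 * ((∫⁻ s, ‖φ s‖ₑ ^ (2:ℝ)) ^ (1 / (2:ℝ)) *
          (∫⁻ s, ‖deriv φ s‖ₑ ^ (2:ℝ)) ^ (1 / (2:ℝ)))) ^ 2 := by
        gcongr
        exact h4.trans (by gcongr)
    _ = _ := by
        rw [mul_pow, mul_pow, e2, e2]
        simp_rw [e1]
        norm_num

/-- Pointwise inequality. -/
lemma ls_pointwise (d : ℕ) (hd : 1 ≤ d) (f S ε : ℝ) (hf : 0 ≤ f) (hS : 0 < S) (hε : 0 < ε)
    (m D : Fin d → ℝ) (hm : ∀ i, 0 ≤ m i) (hD : ∀ i, 0 ≤ D i) (h : ∀ i, f ^ 2 ≤ 4 * (m i * D i)) :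
    f * Real.log f ≤ 2 * ε * ∑ i, f * D i / m i - (d / 2 : ℝ) * (1 + Real.log ε) * f
      + d * ((f ^ (1 - ((d:ℝ) - 1) * (1 / d)) * ∏ i, m i ^ (1 / d : ℝ)) / S ^ (1 / d : ℝ) - f)
      + f * Real.log S := by
  have hd0 : (0:ℝ) < d := by exact_mod_cast hd
  rcases hf.eq_or_lt with rfl | hf
  · simp only [zero_mul, zero_div, Finset.sum_const_zero, mul_zero, sub_zero, add_zero, zero_add]
    have : 0 ≤ ∏ i, m i ^ (1 / d : ℝ) :=
      Finset.prod_nonneg fun i _ => (Real.rpow_nonneg (hm i) _)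
    positivity
  have hmD : ∀ i, 0 < m i * D i := fun i => by
    have := h i
    have : 0 < f ^ 2 := by positivity
    linarith [h i]
  have hm' : ∀ i, 0 < m i := fun i => pos_of_mul_pos_left (hmD i) (hD i)
  have hD' : ∀ i, 0 < D i := fun i => pos_of_mul_pos_right (hmD i) (hm i)
  have key : ∀ i, Real.log f - Real.log (m i) ≤ 2 * ε * (D i / m i) - (1 + Real.log ε) / 2 := by
    intro i
    have a1 := Real.log_le_log (by positivity) (h i)
    rw [Real.log_pow, Real.log_mul (by norm_num) (hmD i).ne',
      Real.log_mul (hm' i).ne' (hD' i).ne'] at a1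
    have hmi := hm' i
    have hDi := hD' i
    have a2 := Real.log_le_sub_one_of_pos (x := 4 * (ε * (D i / m i))) (by positivity)
    rw [Real.log_mul (by norm_num) (by positivity), Real.log_mul (by positivity) (by positivity),
      Real.log_div hDi.ne' hmi.ne'] at a2
    push_cast at a1
    linarith
  have ksum := Finset.sum_le_sum (s := Finset.univ) (fun i _ => key i)
  simp only [Finset.sum_sub_distrib, Finset.sum_const, Finset.card_univ, Fintype.card_fin,
    nsmul_eq_mul, ← Finset.mul_sum] at ksum
  set G := f ^ (1 - ((d:ℝ) - 1) * (1 / d)) * ∏ i, m i ^ (1 / d : ℝ) with hG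
  have hP : 0 < ∏ i, m i ^ (1 / d : ℝ) := Finset.prod_pos fun i _ => Real.rpow_pos_of_pos (hm' i) _
  have hGp : 0 < G := mul_pos (Real.rpow_pos_of_pos hf _) hP
  have hSp : 0 < S ^ (1 / d : ℝ) := Real.rpow_pos_of_pos hS _
  have hlG : d * Real.log G = Real.log f + ∑ i, Real.log (m i) := by
    rw [hG, Real.log_mul (Real.rpow_pos_of_pos hf _).ne' hP.ne', Real.log_rpow hf,
      Real.log_prod (fun i _ => (Real.rpow_pos_of_pos (hm' i) _).ne')]
    simp_rw [fun i => Real.log_rpow (hm' i)]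
    rw [← Finset.mul_sum]
    field_simp
    ring
  have gib := Real.log_le_sub_one_of_pos (x := G / S ^ (1 / d : ℝ) / f) (by positivity)
  rw [Real.log_div (by positivity) hf.ne', Real.log_div hGp.ne' hSp.ne', Real.log_rpow hS] at gib
  have gib2 := mul_le_mul_of_nonneg_left gib hd0.le
  have e3 : d * (Real.log G - 1 / d * Real.log S - Real.log f)
      = Real.log f + ∑ i, Real.log (m i) - Real.log S - d * Real.log f := by
    rw [mul_sub, mul_sub, hlG]; field_simp
  rw [e3] at gib2
  have tot : Real.log f ≤ 2 * ε * ∑ i, D i / m i - (d / 2 : ℝ) * (1 + Real.log ε)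
      + d * (G / S ^ (1 / d : ℝ) / f - 1) + Real.log S := by linarith
  calc f * Real.log f ≤ f * (2 * ε * ∑ i, D i / m i - (d / 2 : ℝ) * (1 + Real.log ε)
      + d * (G / S ^ (1 / d : ℝ) / f - 1) + Real.log S) := by gcongr
    _ = _ := by
      have : ∑ i, f * D i / m i = f * ∑ i, D i / m i := by
        rw [Finset.mul_sum]; simp_rw [mul_div_assoc]
      rw [this]
      field_simp

lemma ls_core (d : ℕ) (hd : 1 ≤ d) (w : (Fin d → ℝ) → ℝ) (hw : ContDiff ℝ 1 w)
    (hc : HasCompactSupport w) (ε : ℝ) (hε : 0 < ε) (hS : 0 < ∫ x, w x ^ 2) :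
    ∫ x, w x ^ 2 * Real.log (w x ^ 2) ≤
      2 * ε * (∑ i, ∫ x, (fderiv ℝ w x (Pi.single i 1)) ^ 2)
      - (d / 2 : ℝ) * (1 + Real.log ε) * (∫ x, w x ^ 2)
      + (∫ x, w x ^ 2) * Real.log (∫ x, w x ^ 2) := by
  have hd0 : (0:ℝ) < d := by exact_mod_cast hd
  set S := ∫ x, w x ^ 2 with hSdef
  have hcg : ∀ i, Continuous fun x => fderiv ℝ w x (Pi.single i 1) := fun i =>
    (hw.continuous_fderiv one_ne_zero).clm_apply continuous_const
  have hsg : ∀ i, HasCompactSupport fun x => fderiv ℝ w x (Pi.single i (1:ℝ)) := fun i =>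
    (hc.fderiv ℝ).comp_left (g := fun L : (Fin d → ℝ) →L[ℝ] ℝ => L (Pi.single i 1)) (by simp)
  set g : Fin d → (Fin d → ℝ) → ℝ := fun i x => fderiv ℝ w x (Pi.single i 1) with hg
  have hsq : ∀ {X : Type} [TopologicalSpace X] {φ : X → ℝ}, HasCompactSupport φ →
      HasCompactSupport fun x => φ x ^ 2 := fun h =>
    h.comp_left (g := fun y : ℝ => y ^ 2) (by simp)
  have hwint : Integrable fun x => w x ^ 2 :=
    (hw.continuous.pow 2).integrable_of_hasCompactSupport (hsq hc)
  have hgint : ∀ i, Integrable fun x => g i x ^ 2 := fun i =>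
    ((hcg i).pow 2).integrable_of_hasCompactSupport (hsq (hsg i))
  have hlint : Integrable fun x => w x ^ 2 * Real.log (w x ^ 2) := by
    refine (Real.continuous_mul_log.comp (hw.continuous.pow 2)).integrable_of_hasCompactSupport ?_
    exact (hsq hc).comp_left (g := fun y : ℝ => y * Real.log y) (by simp)
  set F : (Fin d → ℝ) → ℝ≥0∞ := fun x => ENNReal.ofReal (w x ^ 2) with hF
  set E : Fin d → (Fin d → ℝ) → ℝ≥0∞ := fun i x => ENNReal.ofReal (g i x ^ 2) with hE
  set M : Fin d → (Fin d → ℝ) → ℝ≥0∞ := fun i x => ∫⁻ t, F (Function.update x i t) with hM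
  set D : Fin d → (Fin d → ℝ) → ℝ≥0∞ := fun i x => ∫⁻ t, E i (Function.update x i t) with hD
  have hFm : Measurable F := (hw.continuous.pow 2).measurable.ennreal_ofReal
  have hEm : ∀ i, Measurable (E i) := fun i => ((hcg i).pow 2).measurable.ennreal_ofReal
  have hMl : ∀ i, M i = lmarginal (fun _ => volume) {i} F := fun i => by
    rw [lmarginal_singleton]
  have hDl : ∀ i, D i = lmarginal (fun _ => volume) {i} (E i) := fun i => by
    rw [lmarginal_singleton]
  have hMm : ∀ i, Measurable (M i) := fun i => by rw [hMl]; exact hFm.lmarginal _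
  have hDm : ∀ i, Measurable (D i) := fun i => by rw [hDl]; exact (hEm i).lmarginal _
  -- lines
  have hline : ∀ (φ : (Fin d → ℝ) → ℝ), Continuous φ → HasCompactSupport φ → ∀ i x,
      ∫⁻ t, ENNReal.ofReal (φ (Function.update x i t) ^ 2) ≠ ∞ := by
    intro φ h1 h2 i x
    have hi : Integrable fun t => φ (Function.update x i t) ^ 2 :=
      ((h1.comp (isClosedEmbedding_update x i).continuous).pow 2).integrable_of_hasCompactSupport
        (hsq (h2.comp_isClosedEmbedding (isClosedEmbedding_update x i)))
    exact (hasFiniteIntegral_iff_ofReal (Filter.Eventually.of_forall fun t => sq_nonneg _)).1 hi.2 |>.ne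
  have hMfin : ∀ i x, M i x ≠ ∞ := fun i x => hline w hw.continuous hc i x
  have hDfin : ∀ i x, D i x ≠ ∞ := fun i x => hline (g i) (hcg i) (hsg i) i x
  have hFMD : ∀ i x, F x ^ 2 ≤ 4 * (M i x * D i x) := by
    intro i x
    have h1 := ls_oneD (fun t => w (Function.update x i t))
      (hw.comp (contDiff_update 1 x i))
      (hc.comp_isClosedEmbedding (isClosedEmbedding_update x i)) (x i)
    have h2 : ∀ t, deriv (fun t => w (Function.update x i t)) t = g i (Function.update x i t) := by
      intro t
      exact ((hw.differentiable one_ne_zero _).hasFDerivAt.comp_hasDerivAt t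
        (hasDerivAt_update x i t)).deriv
    simp_rw [h2] at h1
    simpa using h1
  -- the two integrals
  set H : Fin d → (Fin d → ℝ) → ℝ≥0∞ := fun i x => F x * D i x / M i x with hH
  have hHm : ∀ i, Measurable (H i) := fun i => (hFm.mul (hDm i)).div (hMm i)
  have hHle : ∀ i, ∫⁻ x, H i x ≤ ∫⁻ x, E i x := by
    intro i
    refine lintegral_le_of_lmarginal_le (μ := fun _ => volume) {i} (hHm i) (hEm i) ?_
    rw [← hDl, lmarginal_singleton]
    intro x
    have e1 : ∀ t, H i (Function.update x i t) = F (Function.update x i t) * (D i x / M i x) := by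
      intro t
      simp only [hH, hM, hD, Function.update_idem]
      rw [mul_div_assoc]
    simp_rw [e1]
    rw [lintegral_mul_const (μ := volume) (f := fun t => F (Function.update x i t)) (D i x / M i x)
      (hFm.comp (measurable_update x))]
    change M i x * (D i x / M i x) ≤ D i x
    exact ENNReal.mul_div_le
  have hEint : ∀ i, ∫⁻ x, E i x = ENNReal.ofReal (∫ x, g i x ^ 2) := fun i =>
    (ofReal_integral_eq_lintegral_ofReal (hgint i) (Filter.Eventually.of_forall fun t => sq_nonneg _)).symm
  have hFint : ∫⁻ x, F x = ENNReal.ofReal S :=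
    (ofReal_integral_eq_lintegral_ofReal hwint (Filter.Eventually.of_forall fun t => sq_nonneg _)).symm
  set G : (Fin d → ℝ) → ℝ≥0∞ := fun x =>
    F x ^ (1 - ((d:ℝ) - 1) * (1 / d)) * ∏ i, M i x ^ (1 / d : ℝ) with hG
  have hGm : Measurable G := (hFm.pow_const _).mul
    (Finset.measurable_prod _ fun i _ => (hMm i).pow_const _)
  have hGle : ∫⁻ x, G x ≤ ENNReal.ofReal (S * S ^ (1 / d : ℝ)) := by
    have := lintegral_mul_prod_lintegral_pow_le (fun _ : Fin d => (volume : Measure ℝ))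
      (p := 1 / d) (by positivity) (by rw [Fintype.card_fin]; field_simp; linarith) hFm
    rw [Fintype.card_fin] at this
    refine (this.trans_eq ?_)
    change (∫⁻ x, F x) ^ _ = _
    rw [hFint, ENNReal.ofReal_rpow_of_pos hS, Real.rpow_add hS, Real.rpow_one]
  have hHi : ∀ i, Integrable fun x => (H i x).toReal := fun i =>
    integrable_toReal_of_lintegral_ne_top (hHm i).aemeasurable
      (ne_top_of_le_ne_top (by rw [hEint]; simp) (hHle i))
  have hGi : Integrable fun x => (G x).toReal :=
    integrable_toReal_of_lintegral_ne_top hGm.aemeasurable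
      (ne_top_of_le_ne_top (by simp) hGle)
  have hHI : ∀ i, ∫ x, (H i x).toReal ≤ ∫ x, g i x ^ 2 := by
    intro i
    have hlt : ∫⁻ x, H i x ≠ ∞ := (ne_top_of_le_ne_top (by rw [hEint]; simp) (hHle i))
    rw [integral_toReal (hHm i).aemeasurable (ae_lt_top (hHm i) hlt)]
    refine ENNReal.toReal_le_of_le_ofReal (integral_nonneg fun x => sq_nonneg _) ?_
    rw [← hEint]; exact hHle i
  have hGI : ∫ x, (G x).toReal ≤ S * S ^ (1 / d : ℝ) := by
    have hlt : ∫⁻ x, G x ≠ ∞ := (ne_top_of_le_ne_top (by simp) hGle)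
    rw [integral_toReal hGm.aemeasurable (ae_lt_top hGm hlt)]
    exact ENNReal.toReal_le_of_le_ofReal (by positivity) hGle
  have hSp : 0 < S ^ (1 / d : ℝ) := Real.rpow_pos_of_pos hS _
  have hpt : ∀ x, w x ^ 2 * Real.log (w x ^ 2) ≤
      2 * ε * ∑ i, (H i x).toReal - (d / 2 : ℝ) * (1 + Real.log ε) * w x ^ 2
      + d * ((G x).toReal / S ^ (1 / d : ℝ) - w x ^ 2) + w x ^ 2 * Real.log S := by
    intro x
    have hFr : (F x).toReal = w x ^ 2 := ENNReal.toReal_ofReal (sq_nonneg _)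
    have h1 := ls_pointwise d hd (w x ^ 2) S ε (sq_nonneg _) hS hε (fun i => (M i x).toReal)
      (fun i => (D i x).toReal) (fun i => ENNReal.toReal_nonneg) (fun i => ENNReal.toReal_nonneg)
      (fun i => by
        have := ENNReal.toReal_mono (by
          exact ENNReal.mul_ne_top (by simp) (ENNReal.mul_ne_top (hMfin i x) (hDfin i x)))
          (hFMD i x)
        rw [ENNReal.toReal_pow, hFr, ENNReal.toReal_mul, ENNReal.toReal_mul] at this
        simpa using this)
    have h2 : (G x).toReal = (w x ^ 2) ^ (1 - ((d:ℝ) - 1) * (1 / d)) *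
        ∏ i, (M i x).toReal ^ (1 / d : ℝ) := by
      simp only [hG]
      rw [ENNReal.toReal_mul, ENNReal.toReal_prod, ← ENNReal.toReal_rpow, hFr]
      simp_rw [← ENNReal.toReal_rpow]
    have h3 : ∀ i, (H i x).toReal = w x ^ 2 * (D i x).toReal / (M i x).toReal := by
      intro i
      simp only [hH]
      rw [ENNReal.toReal_div, ENNReal.toReal_mul, hFr]
    rw [h2]
    simp_rw [h3]
    exact h1
  have i1 : Integrable fun x => 2 * ε * ∑ i, (H i x).toReal :=
    (integrable_finsetSum _ fun i _ => hHi i).const_mul _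
  have i2 : Integrable fun x => (d / 2 : ℝ) * (1 + Real.log ε) * w x ^ 2 := hwint.const_mul _
  have i3 : Integrable fun x => d * ((G x).toReal / S ^ (1 / d : ℝ) - w x ^ 2) :=
    ((hGi.div_const _).sub hwint).const_mul _
  have i4 : Integrable fun x => w x ^ 2 * Real.log S := hwint.mul_const _
  refine (integral_mono hlint (((i1.sub i2).add i3).add i4) hpt).trans ?_
  have j1 := integral_add ((i1.sub i2).add i3) i4
  have j2 := integral_add (i1.sub i2) i3
  have j3 := integral_sub i1 i2
  simp only [Pi.add_apply, Pi.sub_apply] at j1 j2 j3 ⊢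
  rw [j1, j2, j3,
    integral_const_mul, integral_const_mul, integral_const_mul, integral_mul_const,
    integral_sub (hGi.div_const _) hwint, integral_div, integral_finsetSum _ (fun i _ => hHi i),
    ← hSdef]
  have k1 : ∑ i, ∫ x, (H i x).toReal ≤ ∑ i, ∫ x, g i x ^ 2 := Finset.sum_le_sum fun i _ => hHI i
  have k2 : (∫ x, (G x).toReal) / S ^ (1 / d : ℝ) - S ≤ 0 := by
    rw [sub_nonpos, div_le_iff₀ hSp]; exact hGI
  have k3 := mul_le_mul_of_nonneg_left k1 (by positivity : 0 ≤ 2 * ε)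
  have k4 := mul_le_mul_of_nonneg_left k2 hd0.le
  change _ ≤ 2 * ε * (∑ i, ∫ x, g i x ^ 2) - (d / 2 : ℝ) * (1 + Real.log ε) * S + S * Real.log S
  linarith

/-- Logarithmic Sobolev inequality: for smooth compactly supported `u : ℝ^d → ℝ` and `ε > 0`,
`∫ u² log|u| ≤ ε ∫ |∇u|² + (d/4) log(1/ε) ∫ u² + (∫ u²) log((∫ u²)^{1/2})`. -/
theorem log_sobolev_inequality
    (d : ℕ) (hd : 1 ≤ d)
    (u : EuclideanSpace ℝ (Fin d) → ℝ)
    (hu : ContDiff ℝ (⊤ : ℕ∞) u) (hsupp : HasCompactSupport u)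
    (ε : ℝ) (hε : 0 < ε) :
    (∫ x, u x ^ 2 * Real.log |u x|) ≤
      ε * (∫ x, ‖fderiv ℝ u x‖ ^ 2)
        + (d / 4 : ℝ) * Real.log (1 / ε) * (∫ x, u x ^ 2)
        + (∫ x, u x ^ 2) * Real.log (Real.sqrt (∫ x, u x ^ 2)) := by
  have hd0 : (0:ℝ) < d := by exact_mod_cast hd
  have hu1 : ContDiff ℝ 1 u := hu.of_le (by exact_mod_cast le_top)
  have hsq : HasCompactSupport fun x => u x ^ 2 :=
    hsupp.comp_left (g := fun y : ℝ => y ^ 2) (by simp)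
  have hint : Integrable fun x => u x ^ 2 :=
    (hu1.continuous.pow 2).integrable_of_hasCompactSupport hsq
  have hN : 0 ≤ ∫ x, ‖fderiv ℝ u x‖ ^ 2 := integral_nonneg fun x => sq_nonneg _
  rcases (integral_nonneg (fun x => sq_nonneg (u x)) : 0 ≤ ∫ x, u x ^ 2).eq_or_lt with h0 | hS
  · have h1 := (integral_eq_zero_iff_of_nonneg (fun x => sq_nonneg (u x)) hint).1 h0.symm
    have h2 : ∫ x, u x ^ 2 * Real.log |u x| = 0 := by
      refine integral_eq_zero_of_ae ?_
      filter_upwards [h1] with x hx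
      have : u x ^ 2 = 0 := hx
      simp [this]
    rw [h2, ← h0]
    simp only [mul_zero, zero_mul, add_zero]
    positivity
  let e := (EuclideanSpace.equiv (Fin d) ℝ).symm
  have tr : ∀ φ : EuclideanSpace ℝ (Fin d) → ℝ, ∫ x, φ (e x) = ∫ x, φ x := fun φ =>
    (PiLp.volume_preserving_toLp (Fin d)).integral_comp
      (MeasurableEquiv.toLp 2 _).measurableEmbedding φ
  have hw : ContDiff ℝ 1 (fun x => u (e x)) := hu1.comp e.contDiff
  have hcw : HasCompactSupport (fun x => u (e x)) :=
    hsupp.comp_homeomorph e.toHomeomorph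
  have core := ls_core d hd (fun x => u (e x)) hw hcw ε hε (by
    rw [tr (fun x => u x ^ 2)]; exact hS)
  rw [tr (fun x => u x ^ 2), tr (fun x => u x ^ 2 * Real.log (u x ^ 2))] at core
  have hfd : ∀ i x, fderiv ℝ (fun x => u (e x)) x (Pi.single i 1)
      = fderiv ℝ u (e x) (EuclideanSpace.single i 1) := by
    intro i x
    have h9 := ((hu1.differentiable one_ne_zero (e x)).hasFDerivAt.comp x
      e.hasFDerivAt).fderiv
    have h10 : fderiv ℝ (fun x => u (e x)) x
      = (fderiv ℝ u (e x)).comp (e : (Fin d → ℝ) →L[ℝ] EuclideanSpace ℝ (Fin d)) := h9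
    rw [h10]
    rfl
  have hcs : ∀ i : Fin d, Integrable fun x =>
      (fderiv ℝ u x (EuclideanSpace.single i (1:ℝ))) ^ 2 := by
    intro i
    have c1 : Continuous fun x => fderiv ℝ u x (EuclideanSpace.single i (1:ℝ)) :=
      (hu1.continuous_fderiv one_ne_zero).clm_apply continuous_const
    have c2 : HasCompactSupport fun x => fderiv ℝ u x (EuclideanSpace.single i (1:ℝ)) :=
      (hsupp.fderiv ℝ).mono' fun x hx => by
        refine subset_tsupport _ ?_
        intro h0
        apply hx
        simp only [h0, zero_apply]
    have c3 : HasCompactSupport fun x => fderiv ℝ u x (EuclideanSpace.single i (1:ℝ)) ^ 2 :=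
      c2.mono fun x hx h0 => hx (by
        have h0' : fderiv ℝ u x (EuclideanSpace.single i (1:ℝ)) = 0 := h0
        simp [h0'])
    exact (c1.pow 2).integrable_of_hasCompactSupport c3
  have hsum : ∑ i, ∫ x, (fderiv ℝ (fun x => u (e x)) x (Pi.single i 1)) ^ 2
      = ∫ x, ‖fderiv ℝ u x‖ ^ 2 := by
    simp_rw [hfd]
    rw [Finset.sum_congr rfl fun i _ =>
      tr (fun x => (fderiv ℝ u x (EuclideanSpace.single i 1)) ^ 2),
      ← integral_finsetSum _ fun i _ => hcs i]
    refine integral_congr_ae (Filter.Eventually.of_forall fun x => ?_)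
    have := (EuclideanSpace.basisFun (Fin d) ℝ).sum_sq_norm_inner_left
      ((InnerProductSpace.toDual ℝ _).symm (fderiv ℝ u x))
    simpa [InnerProductSpace.toDual_symm_apply] using this
  rw [hsum] at core
  have hl : ∫ x, u x ^ 2 * Real.log |u x| = (∫ x, u x ^ 2 * Real.log (u x ^ 2)) / 2 := by
    rw [← integral_div]
    congr 1
    ext x
    rw [Real.log_abs, Real.log_pow]; push_cast; ring
  rw [hl, Real.log_sqrt hS.le, one_div, Real.log_inv]
  nlinarith [mul_pos hd0 hS]
end

section
/- Let d ≥ 1, let D ⊆ ℝ^d be a bounded measurable set of Lebesgue measure m(D), and let u : ℝ^d → ℝ be a smooth function with compact support contained in D. Then for every ε > 0, ∫_D u(x)² log₊|u(x)| dx ≤ ε ∫ |∇u(x)|² dx + (d/4)·log(1/ε) · ‖u‖² + ‖u‖² · log‖u‖ + m(D)/(2e), where ‖u‖ denotes the L² norm of u, with the term ‖u‖² log‖u‖ interpreted as 0 when u ≡ 0. -/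
open MeasureTheory

set_option linter.unusedSectionVars false

lemma ls_mul_log {α : Type*} [TopologicalSpace α] {f : α → ℝ} (hf : Continuous f) :
    Continuous fun a => f a * Real.log (f a) := Real.continuous_mul_log.comp hf

lemma ls_one_dim (v : ℝ → ℝ) (hv : ContDiff ℝ 1 v) (hs : HasCompactSupport v) (ε : ℝ) (hε : 0 < ε) :
    ∫ x, v x ^ 2 * Real.log (v x ^ 2) ≤ (∫ x, 2 * ε * (deriv v x) ^ 2)
      + (1 / 2 * Real.log (1 / ε)) * (∫ x, v x ^ 2)
      + (∫ x, v x ^ 2) * Real.log (∫ x, v x ^ 2) := by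
  have hvc := hv.continuous
  have hdc : Continuous (deriv v) := hv.continuous_deriv le_rfl
  have hds : HasCompactSupport (deriv v) := hs.deriv
  have hs2 : HasCompactSupport (fun x => v x ^ 2) := hs.comp_left (g := fun t => t ^ 2) (by simp)
  have hds2 : HasCompactSupport (fun x => deriv v x ^ 2) :=
    hds.comp_left (g := fun t => t ^ 2) (by simp)
  have i1 : Integrable (fun x => v x ^ 2) := (hvc.pow 2).integrable_of_hasCompactSupport hs2
  have i2 : Integrable (fun x => deriv v x ^ 2) := (hdc.pow 2).integrable_of_hasCompactSupport hds2
  have i3 : Integrable (fun x => v x ^ 2 * Real.log (v x ^ 2)) :=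
    (ls_mul_log (f := fun x => v x ^ 2) (hvc.pow 2)).integrable_of_hasCompactSupport
      (hs.comp_left (g := fun t => t ^ 2 * Real.log (t ^ 2)) (by simp))
  rw [integral_const_mul]
  set M := ∫ x, v x ^ 2 with hM
  set A := ∫ x, deriv v x ^ 2 with hA
  have hM0 : 0 ≤ M := integral_nonneg fun x => sq_nonneg _
  have hA0 : 0 ≤ A := integral_nonneg fun x => sq_nonneg _
  have hsq : 0 < √ε := Real.sqrt_pos.2 hε
  set B := M / √ε + √ε * A with hB
  have key : ∀ x, v x ^ 2 ≤ B := by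
    intro b
    have h1 := HasCompactSupport.integral_Iic_deriv_eq (hv.pow 2) hs2 b
    have i4 : Integrable (fun x => v x ^ 2 / √ε + √ε * deriv v x ^ 2) :=
      (i1.div_const _).add (i2.const_mul _)
    have h2 : ∫ x, (v x ^ 2 / √ε + √ε * deriv v x ^ 2) = B := by
      rw [integral_add (i1.div_const _) (i2.const_mul _), integral_div, integral_const_mul]
    rw [← h2, ← h1]
    have hder : ∀ x, deriv (fun x => v x ^ 2) x = 2 * v x * deriv v x := by
      intro x
      have := ((hv.differentiable one_ne_zero x).hasDerivAt.pow 2).deriv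
      simpa using! this
    have hdc2 : Continuous (deriv (fun x => v x ^ 2)) := (hv.pow 2).continuous_deriv le_rfl
    have i5 : Integrable (deriv (fun x => v x ^ 2)) :=
      hdc2.integrable_of_hasCompactSupport hs2.deriv
    calc _ ≤ ∫ x in Set.Iic b, (v x ^ 2 / √ε + √ε * deriv v x ^ 2) := by
          refine integral_mono i5.integrableOn i4.integrableOn fun x => ?_
          simp only [hder]
          have : v x ^ 2 / √ε + √ε * deriv v x ^ 2 - 2 * v x * deriv v x
              = (v x - √ε * deriv v x) ^ 2 / √ε := by
            field_simp; ring
          have h0 : 0 ≤ (v x - √ε * deriv v x) ^ 2 / √ε := by positivity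
          linarith
      _ ≤ _ := setIntegral_le_integral i4 (Filter.Eventually.of_forall fun x => by
          simp only [Pi.zero_apply]; positivity)
  have h3 : ∫ x, v x ^ 2 * Real.log (v x ^ 2) ≤ M * Real.log B := by
    rw [hM, ← integral_mul_const]
    refine integral_mono i3 (i1.mul_const _) fun x => ?_
    simp only
    rcases eq_or_ne (v x) 0 with h | h
    · simp [h]
    · gcongr
      exact key x
  refine h3.trans ?_
  rcases hM0.eq_or_lt with h | h
  · rw [← h]; simp; positivity
  · have hBM : B = M * (√ε)⁻¹ * (1 + ε * A / M) := by
      rw [hB]; field_simp; rw [Real.sq_sqrt hε.le]; ring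
    have h4 : 0 < 1 + ε * A / M := by positivity
    rw [hBM, Real.log_mul (by positivity) h4.ne', Real.log_mul h.ne' (by positivity),
      Real.log_inv, Real.log_sqrt hε.le, one_div ε, Real.log_inv]
    have h5 : Real.log (1 + ε * A / M) ≤ ε * A / M := by
      have := Real.log_le_sub_one_of_pos h4; linarith
    have h6 : M * Real.log (1 + ε * A / M) ≤ ε * A := by
      calc _ ≤ M * (ε * A / M) := by gcongr
        _ = _ := by field_simp
    have : 0 ≤ ε * A := by positivity
    linarith

section tensor
variable {X Y : Type*} [NormedAddCommGroup X] [MeasurableSpace X] [BorelSpace X]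
  [SecondCountableTopology X] [NormedAddCommGroup Y] [MeasurableSpace Y] [BorelSpace Y]
  [SecondCountableTopology Y]

lemma ls_marg_cont (μ : Measure X) [IsFiniteMeasureOnCompacts μ] (F : X × Y → ℝ)
    (hF : Continuous F) (hs : HasCompactSupport F) :
    Continuous (fun y => ∫ x, F (x, y) ∂μ) := by
  rw [← continuousOn_univ]
  refine continuousOn_integral_of_compact_support (k := Prod.fst '' tsupport F)
    (f := fun y x => F (x, y)) (hs.image continuous_fst) ?_ ?_
  · exact (hF.comp continuous_swap).continuousOn
  · intro y x _ hx
    by_contra h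
    exact hx ⟨(x, y), subset_tsupport _ h, rfl⟩

lemma ls_marg_supp (μ : Measure X) (F : X × Y → ℝ) (hs : HasCompactSupport F) :
    HasCompactSupport (fun y => ∫ x, F (x, y) ∂μ) := by
  refine HasCompactSupport.intro (K := Prod.snd '' tsupport F) (hs.image continuous_snd) ?_
  intro y hy
  have : ∀ x, F (x, y) = 0 := fun x => by
    by_contra h
    exact hy ⟨(x, y), subset_tsupport _ h, rfl⟩
  simp [this]

lemma ls_slice_supp (F : X × Y → ℝ) (hs : HasCompactSupport F) (y : Y) :
    HasCompactSupport (fun x => F (x, y)) := by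
  refine HasCompactSupport.intro (K := Prod.fst '' tsupport F) (hs.image continuous_fst) ?_
  intro x hx
  by_contra h
  exact hx ⟨(x, y), subset_tsupport _ h, rfl⟩

lemma ls_log_marg (μ : Measure X) (ν : Measure Y) [IsFiniteMeasureOnCompacts μ]
    [IsFiniteMeasureOnCompacts ν] [SFinite μ] [SFinite ν] (F : X × Y → ℝ)
    (hF : Continuous F) (hs : HasCompactSupport F) (h0 : ∀ p, 0 ≤ F p) :
    Integrable (fun p : X × Y => F p * Real.log (∫ x, F (x, p.2) ∂μ)) (μ.prod ν) ∧
    ∫ p : X × Y, F p * Real.log (∫ x, F (x, p.2) ∂μ) ∂(μ.prod ν) =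
      ∫ y, (∫ x, F (x, y) ∂μ) * Real.log (∫ x, F (x, y) ∂μ) ∂ν := by
  have hg := ls_marg_cont μ F hF hs
  have hgs := ls_marg_supp μ F hs
  have hi : Integrable (fun p : X × Y => F p * Real.log (∫ x, F (x, p.2) ∂μ)) (μ.prod ν) := by
    rw [integrable_prod_iff']
    · refine ⟨Filter.Eventually.of_forall fun y => ?_, ?_⟩
      · have hc : Continuous (fun x => F (x, y)) := hF.comp (by fun_prop)
        exact (hc.integrable_of_hasCompactSupport (μ := μ) (ls_slice_supp F hs y)).mul_const
          (Real.log (∫ x, F (x, y) ∂μ))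
      · have : (fun y => ∫ x, ‖F (x, y) * Real.log (∫ x, F (x, y) ∂μ)‖ ∂μ) =
            fun y => |(∫ x, F (x, y) ∂μ) * Real.log (∫ x, F (x, y) ∂μ)| := by
          ext y
          simp only [norm_mul, Real.norm_eq_abs, abs_of_nonneg (h0 _)]
          rw [integral_mul_const, abs_mul, abs_of_nonneg (integral_nonneg fun x => h0 _)]
        rw [this]
        exact ((ls_mul_log hg).abs).integrable_of_hasCompactSupport
          (hgs.comp_left (g := fun t => |t * Real.log t|) (by simp))
    · refine (hF.measurable.mul ?_).aestronglyMeasurable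
      exact Real.measurable_log.comp (hg.measurable.comp measurable_snd)
  refine ⟨hi, ?_⟩
  rw [integral_prod_symm _ hi]
  simp only [integral_mul_const]

lemma ls_marg_zero (μ : Measure X) [IsFiniteMeasureOnCompacts μ] [μ.IsOpenPosMeasure]
    (F : X × Y → ℝ) (hF : Continuous F) (hs : HasCompactSupport F) (h0 : ∀ p, 0 ≤ F p) (x : X) (y : Y)
    (h : ∫ x, F (x, y) ∂μ = 0) : F (x, y) = 0 := by
  have hc : Continuous (fun x => F (x, y)) := hF.comp (by fun_prop)
  have hi := hc.integrable_of_hasCompactSupport (μ := μ) (ls_slice_supp F hs y)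
  have := (integral_eq_zero_iff_of_nonneg (fun x => h0 (x, y)) hi).1 h
  have := (hc.ae_eq_iff_eq μ continuous_const).1 this
  exact congrFun this x

lemma ls_mutual_pt (f a b M : ℝ) (hf : 0 ≤ f) (ha : 0 ≤ a) (hb : 0 ≤ b) (hM : 0 < M)
    (ha0 : a = 0 → f = 0) (hb0 : b = 0 → f = 0) :
    f * Real.log b + f * Real.log a + f ≤ f * Real.log f + f * Real.log M + a * b / M := by
  rcases hf.eq_or_lt with h | h
  · rw [← h]; simp; positivity
  · have ha' : 0 < a := lt_of_le_of_ne ha fun h' => h.ne' (ha0 h'.symm)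
    have hb' : 0 < b := lt_of_le_of_ne hb fun h' => h.ne' (hb0 h'.symm)
    have h1 := Real.log_le_sub_one_of_pos (show 0 < a * b / (M * f) by positivity)
    rw [Real.log_div (by positivity) (by positivity), Real.log_mul ha'.ne' hb'.ne',
      Real.log_mul hM.ne' h.ne'] at h1
    have h2 := mul_le_mul_of_nonneg_left h1 hf
    have h3 : f * (a * b / (M * f) - 1) = a * b / M - f := by field_simp
    rw [h3] at h2
    linarith

lemma ls_mutual (μ : Measure X) (ν : Measure Y) [IsFiniteMeasureOnCompacts μ]
    [IsFiniteMeasureOnCompacts ν] [SigmaFinite μ] [SigmaFinite ν] [μ.IsOpenPosMeasure]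
    [ν.IsOpenPosMeasure] (F : X × Y → ℝ)
    (hF : Continuous F) (hs : HasCompactSupport F) (h0 : ∀ p, 0 ≤ F p) :
    (∫ y, (∫ x, F (x, y) ∂μ) * Real.log (∫ x, F (x, y) ∂μ) ∂ν)
      + (∫ x, (∫ y, F (x, y) ∂ν) * Real.log (∫ y, F (x, y) ∂ν) ∂μ)
    ≤ (∫ p, F p * Real.log (F p) ∂(μ.prod ν))
      + (∫ p, F p ∂(μ.prod ν)) * Real.log (∫ p, F p ∂(μ.prod ν)) := by
  have iF : Integrable F (μ.prod ν) := hF.integrable_of_hasCompactSupport hs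
  have iFl : Integrable (fun p => F p * Real.log (F p)) (μ.prod ν) :=
    (ls_mul_log hF).integrable_of_hasCompactSupport
      (hs.comp_left (g := fun t => t * Real.log t) (by simp))
  have hF' : Continuous (fun p : Y × X => F p.swap) := hF.comp continuous_swap
  have hs' : HasCompactSupport (fun p : Y × X => F p.swap) :=
    hs.comp_homeomorph (Homeomorph.prodComm Y X)
  obtain ⟨ig, eg⟩ := ls_log_marg μ ν F hF hs h0
  obtain ⟨im', em'⟩ := ls_log_marg ν μ (fun p : Y × X => F p.swap) hF' hs' (fun p => h0 _)
  have im : Integrable (fun p : X × Y => F p * Real.log (∫ y, F (p.1, y) ∂ν)) (μ.prod ν) :=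
    im'.swap
  have em : ∫ p : X × Y, F p * Real.log (∫ y, F (p.1, y) ∂ν) ∂(μ.prod ν) =
      ∫ x, (∫ y, F (x, y) ∂ν) * Real.log (∫ y, F (x, y) ∂ν) ∂μ := by
    rw [integral_prod _ im]
    simp only [integral_mul_const]
  have hM0 : 0 ≤ ∫ p, F p ∂(μ.prod ν) := integral_nonneg h0
  rcases hM0.eq_or_lt with h | h
  · have h1 := (integral_eq_zero_iff_of_nonneg h0 iF).1 h.symm
    have h2 := (hF.ae_eq_iff_eq (μ.prod ν) continuous_const).1 h1
    have h3 : ∀ p, F p = 0 := fun p => congrFun h2 p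
    simp [h3]
  · set M := ∫ p, F p ∂(μ.prod ν) with hM
    have hgi : Integrable (fun y => ∫ x, F (x, y) ∂μ) ν := iF.integral_prod_right
    have hmi : Integrable (fun x => ∫ y, F (x, y) ∂ν) μ := iF.integral_prod_left
    have iab : Integrable (fun p : X × Y => (∫ y, F (p.1, y) ∂ν) * (∫ x, F (x, p.2) ∂μ) / M)
        (μ.prod ν) := (hmi.mul_prod hgi).div_const _
    have eab : ∫ p : X × Y, (∫ y, F (p.1, y) ∂ν) * (∫ x, F (x, p.2) ∂μ) / M ∂(μ.prod ν) = M := by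
      rw [integral_div, integral_prod_mul (fun x => ∫ y, F (x, y) ∂ν) (fun y => ∫ x, F (x, y) ∂μ),
        ← integral_prod _ iF, ← integral_prod_symm _ iF, ← hM]
      field_simp
    have := integral_mono ((ig.add im).add iF) ((iFl.add (iF.mul_const (Real.log M))).add iab)
      (fun p => ls_mutual_pt (F p) (∫ y, F (p.1, y) ∂ν) (∫ x, F (x, p.2) ∂μ) M (h0 _)
        (integral_nonneg fun y => h0 _) (integral_nonneg fun y => h0 _) h
        (fun h => ls_marg_zero ν (fun p : Y × X => F p.swap) hF' hs' (fun p => h0 _) p.2 p.1 h)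
        (fun h => ls_marg_zero μ F hF hs h0 p.1 p.2 h))
    rw [integral_add' (ig.add im) iF, integral_add' ig im,
      integral_add' (iFl.add (iF.mul_const (Real.log M))) iab,
      integral_add' iFl (iF.mul_const (Real.log M)), eg, em, eab, integral_mul_const, ← hM] at this
    linarith

lemma ls_tensor (μ : Measure X) (ν : Measure Y) [IsFiniteMeasureOnCompacts μ]
    [IsFiniteMeasureOnCompacts ν] [SigmaFinite μ] [SigmaFinite ν] [μ.IsOpenPosMeasure]
    [ν.IsOpenPosMeasure] (F G H : X × Y → ℝ)
    (hF : Continuous F) (hs : HasCompactSupport F) (h0 : ∀ p, 0 ≤ F p)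
    (hG : Continuous G) (hGs : HasCompactSupport G) (hH : Continuous H) (hHs : HasCompactSupport H)
    (c₁ c₂ : ℝ)
    (h1 : ∀ y, ∫ x, F (x, y) * Real.log (F (x, y)) ∂μ ≤ (∫ x, G (x, y) ∂μ)
      + c₁ * (∫ x, F (x, y) ∂μ) + (∫ x, F (x, y) ∂μ) * Real.log (∫ x, F (x, y) ∂μ))
    (h2 : ∀ x, ∫ y, F (x, y) * Real.log (F (x, y)) ∂ν ≤ (∫ y, H (x, y) ∂ν)
      + c₂ * (∫ y, F (x, y) ∂ν) + (∫ y, F (x, y) ∂ν) * Real.log (∫ y, F (x, y) ∂ν)) :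
    ∫ p, F p * Real.log (F p) ∂(μ.prod ν) ≤ (∫ p, G p ∂(μ.prod ν)) + (∫ p, H p ∂(μ.prod ν))
      + (c₁ + c₂) * (∫ p, F p ∂(μ.prod ν))
      + (∫ p, F p ∂(μ.prod ν)) * Real.log (∫ p, F p ∂(μ.prod ν)) := by
  have iF : Integrable F (μ.prod ν) := hF.integrable_of_hasCompactSupport hs
  have iG : Integrable G (μ.prod ν) := hG.integrable_of_hasCompactSupport hGs
  have iH : Integrable H (μ.prod ν) := hH.integrable_of_hasCompactSupport hHs
  have iFl : Integrable (fun p => F p * Real.log (F p)) (μ.prod ν) :=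
    (ls_mul_log hF).integrable_of_hasCompactSupport
      (hs.comp_left (g := fun t => t * Real.log t) (by simp))
  have hF' : Continuous (fun p : Y × X => F p.swap) := hF.comp continuous_swap
  have hs' : HasCompactSupport (fun p : Y × X => F p.swap) :=
    hs.comp_homeomorph (Homeomorph.prodComm Y X)
  have igl : Integrable (fun y => (∫ x, F (x, y) ∂μ) * Real.log (∫ x, F (x, y) ∂μ)) ν :=
    (ls_mul_log (ls_marg_cont μ F hF hs)).integrable_of_hasCompactSupport
      ((ls_marg_supp μ F hs).comp_left (g := fun t => t * Real.log t) (by simp))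
  have iml : Integrable (fun x => (∫ y, F (x, y) ∂ν) * Real.log (∫ y, F (x, y) ∂ν)) μ :=
    (ls_mul_log (ls_marg_cont ν _ hF' hs')).integrable_of_hasCompactSupport
      ((ls_marg_supp ν _ hs').comp_left (g := fun t => t * Real.log t) (by simp))
  have A := integral_mono iFl.integral_prod_right
    ((iG.integral_prod_right.add (iF.integral_prod_right.const_mul c₁)).add igl) h1
  have B := integral_mono iFl.integral_prod_left
    ((iH.integral_prod_left.add (iF.integral_prod_left.const_mul c₂)).add iml) h2
  rw [integral_add' (iG.integral_prod_right.add (iF.integral_prod_right.const_mul c₁)) igl,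
    integral_add' iG.integral_prod_right (iF.integral_prod_right.const_mul c₁),
    integral_const_mul, ← integral_prod_symm _ iFl, ← integral_prod_symm _ iG,
    ← integral_prod_symm _ iF] at A
  rw [integral_add' (iH.integral_prod_left.add (iF.integral_prod_left.const_mul c₂)) iml,
    integral_add' iH.integral_prod_left (iF.integral_prod_left.const_mul c₂),
    integral_const_mul, ← integral_prod _ iFl, ← integral_prod _ iH,
    ← integral_prod _ iF] at B
  have C := ls_mutual μ ν F hF hs h0
  linarith
end tensor

lemma ls_pi (ε : ℝ) (hε : 0 < ε) : ∀ (d : ℕ) (u : (Fin d → ℝ) → ℝ), ContDiff ℝ 1 u →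
    HasCompactSupport u →
    ∫ x, u x ^ 2 * Real.log (u x ^ 2) ≤
      (∫ x, 2 * ε * ∑ i, (fderiv ℝ u x (Pi.single i 1)) ^ 2)
      + ((d : ℝ) / 2 * Real.log (1 / ε)) * (∫ x, u x ^ 2)
      + (∫ x, u x ^ 2) * Real.log (∫ x, u x ^ 2) := by
  intro d
  induction d with
  | zero =>
    intro u hu hs
    rw [Measure.volume_pi_eq_dirac (x := (0 : Fin 0 → ℝ))]
    simp
  | succ d ih =>
    intro u hu hs
    let Φ : (ℝ × (Fin d → ℝ)) ≃L[ℝ] (Fin (d + 1) → ℝ) := Fin.consEquivL ℝ (fun _ => ℝ)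
    have hΦ : ∀ x y, Φ (x, y) = Fin.cons x y := fun x y => rfl
    have hmp : MeasurePreserving (fun p => Φ p) (volume : Measure (ℝ × (Fin d → ℝ))) volume := by
      have := (volume_preserving_piFinSuccAbove (fun _ : Fin (d + 1) => ℝ) 0).symm
      convert! this using 1
      ext p i
      rcases p with ⟨x, y⟩
      rw [hΦ]
      simp [MeasurableEquiv.piFinSuccAbove, MeasurableEquiv.symm, Fin.insertNthEquiv]
    have hme : MeasurableEmbedding (fun p => Φ p) := Φ.toHomeomorph.measurableEmbedding
    have cov : ∀ f : (Fin (d + 1) → ℝ) → ℝ, ∫ z, f z = ∫ p, f (Φ p) :=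
      fun f => (hmp.integral_comp hme f).symm
    have hdc : ∀ i : Fin (d + 1), Continuous (fun z => fderiv ℝ u z (Pi.single i 1)) := fun i =>
      (hu.continuous_fderiv one_ne_zero).clm_apply continuous_const
    have hfs := hs.fderiv (𝕜 := ℝ)
    have hcs : ∀ h : (Fin (d + 1) → ℝ) → ℝ, HasCompactSupport h →
        HasCompactSupport (fun p => h (Φ p)) := fun h hh => hh.comp_homeomorph Φ.toHomeomorph
    have hx : ∀ x y, HasFDerivAt (fun x => Φ (x, y))
        ((Φ : (ℝ × (Fin d → ℝ)) →L[ℝ] (Fin (d + 1) → ℝ)).comp (.inl ℝ ℝ (Fin d → ℝ))) x := by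
      intro x y
      exact Φ.hasFDerivAt.comp x (hasFDerivAt_prodMk_left x y)
    have hy : ∀ x y, HasFDerivAt (fun y => Φ (x, y))
        ((Φ : (ℝ × (Fin d → ℝ)) →L[ℝ] (Fin (d + 1) → ℝ)).comp (.inr ℝ ℝ (Fin d → ℝ))) y := by
      intro x y
      exact Φ.hasFDerivAt.comp y (hasFDerivAt_prodMk_right x y)
    have hud : ∀ z, HasFDerivAt u (fderiv ℝ u z) z := fun z =>
      (hu.differentiable one_ne_zero z).hasFDerivAt
    have e0 : Φ (1, 0) = Pi.single 0 1 := by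
      rw [hΦ]; ext i; refine Fin.cases ?_ (fun j => ?_) i <;> simp
    have es : ∀ i : Fin d, Φ (0, Pi.single i 1) = Pi.single i.succ 1 := by
      intro i
      rw [hΦ]; ext j; refine Fin.cases ?_ (fun j => ?_) j
      · simp
      · simp [Pi.single_apply]
    have dx : ∀ x y, deriv (fun x => u (Φ (x, y))) x
        = fderiv ℝ u (Φ (x, y)) (Pi.single 0 1) := by
      intro x y
      have := ((hud (Φ (x, y))).comp x (hx x y)).hasDerivAt.deriv
      rw [← e0]
      simpa using! this
    have dy : ∀ x y i, fderiv ℝ (fun y => u (Φ (x, y))) y (Pi.single i 1)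
        = fderiv ℝ u (Φ (x, y)) (Pi.single i.succ 1) := by
      intro x y i
      have := ((hud (Φ (x, y))).comp y (hy x y)).fderiv
      have h2 : fderiv ℝ (fun y => u (Φ (x, y))) y = _ := this
      rw [← es, h2]
      simp
    have cx : ∀ y, ContDiff ℝ 1 (fun x => u (Φ (x, y))) := fun y =>
      hu.comp (Φ.contDiff.comp (contDiff_id.prodMk contDiff_const))
    have cy : ∀ x, ContDiff ℝ 1 (fun y => u (Φ (x, y))) := fun x =>
      hu.comp (Φ.contDiff.comp (contDiff_const.prodMk contDiff_id))
    have su := hcs u hs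
    have sy : ∀ x, HasCompactSupport (fun y => u (Φ (x, y))) := fun x =>
      ls_slice_supp (fun p : (Fin d → ℝ) × ℝ => u (Φ p.swap))
        (su.comp_homeomorph (Homeomorph.prodComm (Fin d → ℝ) ℝ)) x
    have sx : ∀ y, HasCompactSupport (fun x => u (Φ (x, y))) := fun y =>
      ls_slice_supp (fun p => u (Φ p)) su y
    have hG : HasCompactSupport (fun z => 2 * ε * (fderiv ℝ u z (Pi.single 0 1)) ^ 2) :=
      hfs.comp_left (g := fun L : (Fin (d + 1) → ℝ) →L[ℝ] ℝ => 2 * ε * (L (Pi.single 0 1)) ^ 2)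
        (by simp)
    have hH : HasCompactSupport
        (fun z => 2 * ε * ∑ i : Fin d, (fderiv ℝ u z (Pi.single i.succ 1)) ^ 2) :=
      hfs.comp_left (g := fun L : (Fin (d + 1) → ℝ) →L[ℝ] ℝ =>
        2 * ε * ∑ i : Fin d, (L (Pi.single i.succ 1)) ^ 2) (by simp)
    have cG : Continuous (fun z => 2 * ε * (fderiv ℝ u z (Pi.single 0 1)) ^ 2) :=
      continuous_const.mul ((hdc 0).pow 2)
    have cH : Continuous (fun z => 2 * ε * ∑ i : Fin d, (fderiv ℝ u z (Pi.single i.succ 1)) ^ 2) :=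
      continuous_const.mul (continuous_finsetSum _ fun i _ => (hdc i.succ).pow 2)
    have hG' := hcs _ hG
    have hH' := hcs _ hH
    have cG' : Continuous (fun p => 2 * ε * (fderiv ℝ u (Φ p) (Pi.single 0 1)) ^ 2) :=
      cG.comp Φ.continuous
    have cH' : Continuous
        (fun p => 2 * ε * ∑ i : Fin d, (fderiv ℝ u (Φ p) (Pi.single i.succ 1)) ^ 2) :=
      cH.comp Φ.continuous
    clear_value Φ
    have cF : Continuous (fun p => u (Φ p) ^ 2) := (hu.continuous.comp Φ.continuous).pow 2
    have sF : HasCompactSupport (fun p => u (Φ p) ^ 2) :=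
      su.comp_left (g := fun t => t ^ 2) (by simp)
    have T := ls_tensor (volume : Measure ℝ) (volume : Measure (Fin d → ℝ))
      (fun p => u (Φ p) ^ 2)
      (fun p => 2 * ε * (fderiv ℝ u (Φ p) (Pi.single 0 1)) ^ 2)
      (fun p => 2 * ε * ∑ i : Fin d, (fderiv ℝ u (Φ p) (Pi.single i.succ 1)) ^ 2)
      cF sF (fun p => sq_nonneg _)
      cG' hG' cH' hH'
      (1 / 2 * Real.log (1 / ε)) ((d : ℝ) / 2 * Real.log (1 / ε))
      (fun y => by
        have := ls_one_dim _ (cx y) (sx y) ε hε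
        simpa only [dx] using this)
      (fun x => by
        have := ih _ (cy x) (sy x)
        simpa only [dy] using this)
    rw [cov (fun z => u z ^ 2 * Real.log (u z ^ 2)), cov (fun z => u z ^ 2),
      cov (fun z => 2 * ε * ∑ i, (fderiv ℝ u z (Pi.single i 1)) ^ 2)]
    have hsum : ∫ p, 2 * ε * ∑ i, (fderiv ℝ u (Φ p) (Pi.single i 1)) ^ 2
        = (∫ p, 2 * ε * (fderiv ℝ u (Φ p) (Pi.single 0 1)) ^ 2)
        + ∫ p, 2 * ε * ∑ i : Fin d, (fderiv ℝ u (Φ p) (Pi.single i.succ 1)) ^ 2 := by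
      rw [← integral_add
        (cG'.integrable_of_hasCompactSupport hG')
        (cH'.integrable_of_hasCompactSupport hH')]
      congr 1
      ext p
      rw [Fin.sum_univ_succ, mul_add]
    rw [hsum]
    rw [← Measure.volume_eq_prod] at T
    push_cast
    calc _ ≤ _ := T
      _ = _ := by ring

lemma ls_norm_sq {d : ℕ} (L : EuclideanSpace ℝ (Fin d) →L[ℝ] ℝ) :
    ∑ i, (L (WithLp.toLp 2 (Pi.single i 1))) ^ 2 ≤ ‖L‖ ^ 2 := by
  obtain ⟨w, rfl⟩ := (InnerProductSpace.toDual ℝ (EuclideanSpace ℝ (Fin d))).surjective L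
  rw [LinearIsometryEquiv.norm_map, EuclideanSpace.norm_sq_eq]
  refine le_of_eq (Finset.sum_congr rfl fun i _ => ?_)
  have : WithLp.toLp 2 (Pi.single i 1) = EuclideanSpace.single i (1 : ℝ) := rfl
  rw [this, InnerProductSpace.toDual_apply_apply, EuclideanSpace.inner_single_right]
  simp

lemma ls_pt (t : ℝ) : t ^ 2 * Real.log (max 1 |t|)
    ≤ 1 / 2 * (t ^ 2 * Real.log (t ^ 2)) + 1 / (2 * Real.exp 1) := by
  have he := Real.exp_pos 1
  rcases eq_or_ne t 0 with rfl | h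
  · simp; positivity
  have ht : 0 < |t| := abs_pos.2 h
  have hl : Real.log (t ^ 2) = 2 * Real.log |t| := by
    rw [← sq_abs, Real.log_pow]; simp
  rcases le_total 1 |t| with h1 | h1
  · rw [max_eq_right h1, hl]
    have : 0 ≤ 1 / (2 * Real.exp 1) := by positivity
    linarith
  · rw [max_eq_left h1, Real.log_one, mul_zero]
    have hs : 0 < t ^ 2 := by positivity
    have h2 := Real.log_le_sub_one_of_pos (show 0 < 1 / (Real.exp 1 * t ^ 2) by positivity)
    rw [one_div, Real.log_inv, Real.log_mul he.ne' hs.ne', Real.log_exp] at h2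
    have h3 := mul_le_mul_of_nonneg_left h2 hs.le
    have h4 : t ^ 2 * ((Real.exp 1 * t ^ 2)⁻¹ - 1) = 1 / Real.exp 1 - t ^ 2 := by field_simp
    have h5 : 1 / (2 * Real.exp 1) = 1 / 2 * (1 / Real.exp 1) := by field_simp
    rw [h4] at h3
    rw [h5]
    linarith

/-- Modified logarithmic Sobolev inequality with `log₊`: for a smooth function `u`
compactly supported in a bounded measurable set `D` and `ε > 0`,
`∫_D u² log₊|u| ≤ ε ∫ |∇u|² + (d/4) log(1/ε) ‖u‖² + ‖u‖² log‖u‖ + m(D)/(2e)`. -/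
theorem log_sobolev_inequality_plus
    (d : ℕ) (hd : 1 ≤ d)
    (D : Set (EuclideanSpace ℝ (Fin d)))
    (hDmeas : MeasurableSet D) (hDbdd : Bornology.IsBounded D)
    (u : EuclideanSpace ℝ (Fin d) → ℝ)
    (hu : ContDiff ℝ (⊤ : ℕ∞) u) (hsupp : HasCompactSupport u)
    (hsuppD : tsupport u ⊆ D)
    (ε : ℝ) (hε : 0 < ε) :
    (∫ x in D, u x ^ 2 * Real.log (max 1 |u x|)) ≤
      ε * (∫ x, ‖fderiv ℝ u x‖ ^ 2)
        + (d / 4 : ℝ) * Real.log (1 / ε) * (∫ x, u x ^ 2)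
        + (∫ x, u x ^ 2) * Real.log (Real.sqrt (∫ x, u x ^ 2))
        + (volume D).toReal / (2 * Real.exp 1) := by
  have hu1 : ContDiff ℝ 1 u := hu.of_le (by exact_mod_cast le_top)
  have hc := hu.continuous
  let Ψ : (Fin d → ℝ) ≃L[ℝ] EuclideanSpace ℝ (Fin d) :=
    (PiLp.continuousLinearEquiv 2 ℝ (fun _ : Fin d => ℝ)).symm
  have hΨ : ∀ x, Ψ x = WithLp.toLp 2 x := fun x => rfl
  have hmp : MeasurePreserving (fun x => Ψ x) volume volume := PiLp.volume_preserving_toLp (Fin d)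
  have hme : MeasurableEmbedding (fun p => Ψ p) := Ψ.toHomeomorph.measurableEmbedding
  have cov : ∀ f : EuclideanSpace ℝ (Fin d) → ℝ, ∫ p, f (Ψ p) = ∫ z, f z :=
    fun f => hmp.integral_comp hme f
  have main := ls_pi ε hε d (fun x => u (Ψ x)) (hu1.comp Ψ.contDiff)
    (hsupp.comp_homeomorph Ψ.toHomeomorph)
  have hder : ∀ x i, fderiv ℝ (fun x => u (Ψ x)) x (Pi.single i 1)
      = fderiv ℝ u (Ψ x) (WithLp.toLp 2 (Pi.single i 1)) := by
    intro x i
    have := ((hu1.differentiable one_ne_zero (Ψ x)).hasFDerivAt.comp x Ψ.hasFDerivAt).fderiv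
    have h2 : fderiv ℝ (fun x => u (Ψ x)) x = _ := this
    rw [h2]
    rfl
  simp only [hder] at main
  rw [cov (fun z => u z ^ 2 * Real.log (u z ^ 2)), cov (fun z => u z ^ 2),
    cov (fun z => 2 * ε * ∑ i, (fderiv ℝ u z (WithLp.toLp 2 (Pi.single i 1))) ^ 2)] at main
  have hfc := hu1.continuous_fderiv one_ne_zero
  have hfs := hsupp.fderiv (𝕜 := ℝ)
  have hE : ∫ z, 2 * ε * ∑ i, (fderiv ℝ u z (WithLp.toLp 2 (Pi.single i 1))) ^ 2
      ≤ 2 * ε * ∫ x, ‖fderiv ℝ u x‖ ^ 2 := by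
    rw [← integral_const_mul]
    refine integral_mono ?_ ?_ fun z => ?_
    · refine Continuous.integrable_of_hasCompactSupport ?_ (hfs.comp_left
        (g := fun L : EuclideanSpace ℝ (Fin d) →L[ℝ] ℝ =>
          2 * ε * ∑ i, (L (WithLp.toLp 2 (Pi.single i 1))) ^ 2) (by simp))
      exact continuous_const.mul (continuous_finsetSum _ fun i _ =>
        (hfc.clm_apply continuous_const).pow 2)
    · refine Continuous.integrable_of_hasCompactSupport ?_ (hfs.comp_left
        (g := fun L : EuclideanSpace ℝ (Fin d) →L[ℝ] ℝ => 2 * ε * ‖L‖ ^ 2) (by simp))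
      exact continuous_const.mul (hfc.norm.pow 2)
    · have := ls_norm_sq (fderiv ℝ u z)
      simp only
      gcongr
  have iFl : Integrable (fun x => u x ^ 2 * Real.log (u x ^ 2)) :=
    (ls_mul_log (f := fun x => u x ^ 2) (hc.pow 2)).integrable_of_hasCompactSupport
      (hsupp.comp_left (g := fun t => t ^ 2 * Real.log (t ^ 2)) (by simp))
  have iP : Integrable (fun x => u x ^ 2 * Real.log (max 1 |u x|)) := by
    refine Continuous.integrable_of_hasCompactSupport ?_
      (hsupp.comp_left (g := fun t => t ^ 2 * Real.log (max 1 |t|)) (by simp))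
    refine (hc.pow 2).mul (Continuous.log (by fun_prop) fun x => ?_)
    have : (1 : ℝ) ≤ max 1 |u x| := le_max_left _ _
    positivity
  have hfin : volume D ≠ ⊤ := hDbdd.measure_lt_top.ne
  have icD : IntegrableOn (fun _ : EuclideanSpace ℝ (Fin d) => 1 / (2 * Real.exp 1)) D :=
    integrableOn_const hfin
  have h1 : ∫ x in D, u x ^ 2 * Real.log (max 1 |u x|)
      ≤ ∫ x in D, (1 / 2 * (u x ^ 2 * Real.log (u x ^ 2)) + 1 / (2 * Real.exp 1)) :=
    integral_mono iP.integrableOn ((iFl.const_mul _).integrableOn.add icD) fun x => ls_pt (u x)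
  have h2 : ∫ x in D, u x ^ 2 * Real.log (u x ^ 2) = ∫ x, u x ^ 2 * Real.log (u x ^ 2) := by
    refine setIntegral_eq_integral_of_forall_compl_eq_zero fun x hx => ?_
    have : u x = 0 := by
      by_contra h
      exact hx (hsuppD (subset_tsupport _ h))
    simp [this]
  rw [integral_add (iFl.const_mul _).integrableOn icD, integral_const_mul, h2,
    setIntegral_const, smul_eq_mul] at h1
  rw [Real.log_sqrt (integral_nonneg fun x => sq_nonneg _)]
  have h3 : volume.real D * (1 / (2 * Real.exp 1)) = (volume D).toReal / (2 * Real.exp 1) := by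
    rw [Measure.real]; ring
  rw [h3] at h1
  linarith
end

section
/- Let d ≥ 1 and let u, v : ℝ^d → ℝ be smooth functions with compact support. Then for every ε > 0 and every α ∈ (0,1): ∫ (u(x) log|u(x)| − v(x) log|v(x)|)·(u(x) − v(x)) dx ≤ ε ∫ |∇(u−v)(x)|² dx + (1 + (d/4)·log(1/ε)) · ‖u − v‖² + ‖u − v‖² · log‖u − v‖ + (1/(2(1−α)e)) · (‖u‖^{2(1−α)} + ‖v‖^{2(1−α)}) · ‖u − v‖^{2α}, where ‖·‖ denotes the L² norm, the integrand terms w log|w| are interpreted as 0 where w = 0, and ‖u−v‖² log‖u−v‖ is interpreted as 0 when u = v. -/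
open MeasureTheory

lemma agmon (g : ℝ → ℝ) (hg : ContDiff ℝ 1 g) (hs : HasCompactSupport g) (x : ℝ) :
    ((g x)^2)^2 ≤ (∫ t, (g t)^2) * (∫ t, (deriv g t)^2) := by
  have hc := hg.continuous
  have hc' : Continuous (deriv g) := hg.continuous_deriv le_rfl
  have hs' : HasCompactSupport (deriv g) := hs.deriv
  have hd : ∀ t, HasDerivAt g (deriv g t) t := fun t =>
    (hg.differentiable one_ne_zero t).hasDerivAt
  have h2 : ContDiff ℝ 1 (fun t => (g t)^2) := hg.pow 2
  have hs2 : HasCompactSupport (fun t => (g t)^2) := hs.comp_left (g := fun y : ℝ => y^2) (by simp)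
  have hs2' : HasCompactSupport (fun t => (deriv g t)^2) :=
    hs'.comp_left (g := fun y : ℝ => y^2) (by simp)
  have hder : ∀ t, deriv (fun t => (g t)^2) t = 2 * g t * deriv g t := fun t => by
    have := ((hd t).pow 2).deriv
    simpa [Pi.pow_def] using this
  have e1 := hs2.integral_Iic_deriv_eq h2 x
  have e2 := hs2.integral_Ioi_deriv_eq h2 x
  simp only [hder] at e1 e2
  have i1 : Integrable (fun t => (g t)^2) := (hc.pow 2).integrable_of_hasCompactSupport hs2
  have i2 : Integrable (fun t => (deriv g t)^2) := (hc'.pow 2).integrable_of_hasCompactSupport hs2'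
  have i3 : Integrable (fun t => 2 * g t * deriv g t) :=
    ((continuous_const.mul hc).mul hc').integrable_of_hasCompactSupport hs'.mul_left
  have i4 : Integrable (fun t => |2 * g t * deriv g t|) := i3.abs
  have key : 2 * (g x)^2 ≤ ∫ t, |2 * g t * deriv g t| := by
    have a1 : (g x)^2 ≤ ∫ t in Set.Iic x, |2 * g t * deriv g t| := by
      rw [← e1]; exact integral_mono i3.integrableOn i4.integrableOn (fun t => le_abs_self _)
    have a2 : (g x)^2 ≤ ∫ t in Set.Ioi x, |2 * g t * deriv g t| := by
      have : (g x)^2 = ∫ t in Set.Ioi x, -(2 * g t * deriv g t) := by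
        rw [integral_neg, e2]; ring
      rw [this]
      exact integral_mono i3.neg.integrableOn i4.integrableOn (fun t => neg_le_abs _)
    have := integral_add_compl (measurableSet_Iic (a := x)) i4
    rw [Set.compl_Iic] at this
    linarith
  have hq : ∀ b : ℝ, 0 ≤ (∫ t, (g t)^2) * (b * b) + (-2 * (g x)^2) * b + ∫ t, (deriv g t)^2 := by
    intro b
    have n1 : 0 ≤ ∫ t, (g t)^2 := integral_nonneg fun t => sq_nonneg _
    have n2 : 0 ≤ ∫ t, (deriv g t)^2 := integral_nonneg fun t => sq_nonneg _
    rcases le_or_gt b 0 with hb | hb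
    · have : 0 ≤ (-2 * (g x)^2) * b := by nlinarith [sq_nonneg (g x)]
      have := mul_nonneg n1 (mul_self_nonneg b)
      linarith
    · have : (∫ t, b * |2 * g t * deriv g t|) ≤ ∫ t, ((b*b) * (g t)^2 + (deriv g t)^2) := by
        apply integral_mono (i4.const_mul b) ((i1.const_mul _).add i2)
        intro t
        show b * |2 * g t * deriv g t| ≤ b * b * (g t)^2 + (deriv g t)^2
        simp only [abs_mul, abs_two]
        nlinarith [sq_nonneg (b * |g t| - |deriv g t|), sq_abs (g t), sq_abs (deriv g t)]
      rw [integral_const_mul, integral_add (i1.const_mul _) i2, integral_const_mul] at this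
      nlinarith
  have := discrim_le_zero hq
  unfold discrim at this
  nlinarith

lemma log_le_rpow (t s : ℝ) (ht : 0 < t) (hs : 0 < s) : Real.log t ≤ 1 / (s * Real.exp 1) * t ^ s := by
  have h := Real.add_one_le_exp (s * Real.log t - 1)
  rw [Real.exp_sub] at h
  rw [Real.rpow_def_of_pos ht, mul_comm (Real.log t)]
  rw [sub_add_cancel] at h
  rw [div_mul_eq_mul_div, one_mul, le_div_iff₀ (by positivity)]
  rw [le_div_iff₀ (by positivity)] at h
  linarith

lemma pw_aux (a b s : ℝ) (hs : 0 < s) (hab : |b| ≤ |a|) (hne : a ≠ b):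
    (a * Real.log |a| - b * Real.log |b|) * (a - b) ≤
      (a-b)^2 * Real.log |a-b| + (a-b)^2 +
       1 / (s * Real.exp 1) * ((a-b)^2 * (|a| / |a-b|) ^ s) := by
  have hw : 0 < |a-b| := abs_pos.2 (sub_ne_zero.2 hne)
  have ha : 0 < |a| := by
    rcases (abs_nonneg a).eq_or_lt with h | h
    · rw [← h] at hab
      have h1 := abs_nonpos_iff.1 hab
      have h2 := abs_eq_zero.1 h.symm
      exact absurd (h2.trans h1.symm) hne
    · exact h
  have h1 := log_le_rpow (|a|/|a-b|) s (by positivity) hs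
  rw [Real.log_div ha.ne' hw.ne'] at h1
  have h2 : b * (a - b) * (Real.log |a| - Real.log |b|) ≤ (a-b)^2 := by
    rcases eq_or_ne b 0 with rfl | hb
    · simp; positivity
    have hb' := abs_pos.2 hb
    have h3 : Real.log |a| - Real.log |b| ≤ |a|/|b| - 1 := by
      rw [← Real.log_div ha.ne' hb'.ne']
      exact Real.log_le_sub_one_of_pos (by positivity)
    have h4 : 0 ≤ Real.log |a| - Real.log |b| := sub_nonneg.2 (Real.log_le_log hb' hab)
    have h5 : |b| * (Real.log |a| - Real.log |b|) ≤ |a-b| := by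
      calc _ ≤ |b| * (|a|/|b| - 1) := by gcongr
        _ = |a| - |b| := by field_simp
        _ ≤ _ := abs_sub_abs_le_abs_sub a b
    calc b * (a - b) * (Real.log |a| - Real.log |b|) 
        ≤ |b * (a-b)| * (Real.log |a| - Real.log |b|) := by gcongr; exact le_abs_self _
      _ = |a-b| * (|b| * (Real.log |a| - Real.log |b|)) := by rw [abs_mul]; ring
      _ ≤ |a-b| * |a-b| := by gcongr
      _ = _ := by rw [← sq, sq_abs]
  have h6 := mul_le_mul_of_nonneg_left h1 (sq_nonneg (a-b))
  nlinarith

lemma pw (a b α : ℝ) (h0 : 0 < α) (h1 : α < 1) :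
    (a * Real.log |a| - b * Real.log |b|) * (a - b) ≤
      (a-b)^2 * Real.log |a-b| + (a-b)^2 +
       1 / (2 * (1-α) * Real.exp 1) * ((a^2) ^ (1-α) * ((a-b)^2)^α + (b^2) ^ (1-α) * ((a-b)^2)^α) := by
  have hs : 0 < 2 * (1-α) := by linarith
  rcases eq_or_ne a b with rfl | hne
  · simp [Real.zero_rpow h0.ne']
  have hw : 0 < |a-b| := abs_pos.2 (sub_ne_zero.2 hne)
  have conv : ∀ c : ℝ, (a-b)^2 * (|c| / |a-b|) ^ (2*(1-α)) = (c^2) ^ (1-α) * ((a-b)^2)^α := by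
    intro c
    rw [Real.rpow_mul (by positivity), Real.rpow_two, div_pow, sq_abs, sq_abs,
      Real.div_rpow (by positivity) (by positivity)]
    have : ((a-b)^2)^α = (a-b)^2 / ((a-b)^2)^(1-α) := by
      have hp : 0 < (a-b)^2 := by rw [← sq_abs]; positivity
      rw [Real.rpow_sub hp, Real.rpow_one, div_div_cancel₀ hp.ne']
    rw [this]; ring
  have pa : 0 ≤ (a^2) ^ (1-α) * ((a-b)^2)^α := by positivity
  have pb : 0 ≤ (b^2) ^ (1-α) * ((a-b)^2)^α := by positivity
  have pc : 0 ≤ 1 / (2 * (1-α) * Real.exp 1) := by positivity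
  rcases le_total |b| |a| with h | h
  · have := pw_aux a b _ hs h hne
    rw [conv] at this
    nlinarith [mul_nonneg pc pb]
  · have := pw_aux b a _ hs h hne.symm
    have e : (b-a)^2 = (a-b)^2 := by ring
    rw [abs_sub_comm b a, e, conv] at this
    nlinarith [mul_nonneg pc pa]

lemma nn_helper {X : Type*} [MeasurableSpace X] {μ : Measure X} (F : X → ℝ) (hm : Measurable F)
    (h0 : ∀ x, 0 ≤ F x) (C : ℝ) (hC : 0 ≤ C) (h : ∫⁻ x, ENNReal.ofReal (F x) ∂μ ≤ ENNReal.ofReal C) :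
    Integrable F μ ∧ ∫ x, F x ∂μ ≤ C := by
  constructor
  · refine ⟨hm.aestronglyMeasurable, ?_⟩
    rw [hasFiniteIntegral_iff_ofReal (Filter.Eventually.of_forall h0)]
    exact h.trans_lt ENNReal.ofReal_lt_top
  · rw [integral_eq_lintegral_of_nonneg_ae (Filter.Eventually.of_forall h0) hm.aestronglyMeasurable]
    exact ENNReal.toReal_le_of_le_ofReal hC h

lemma pw_i (ρ R Q a : ℝ) (hρ : 0 < ρ) (hR : 0 < R) (h : ρ^2 ≤ R * Q) (ha : 0 < a) :
    Real.log ρ - Real.log R ≤ a / 2 * (Q / R) - (1 + Real.log a) / 2 := by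
  have hQ : 0 < Q := by
    have : 0 < R * Q := lt_of_lt_of_le (by positivity) h
    exact (mul_pos_iff_of_pos_left hR).1 this
  have h1 := Real.log_le_log (by positivity) h
  rw [Real.log_pow, Real.log_mul hR.ne' hQ.ne'] at h1
  have h2 := Real.log_le_sub_one_of_pos (x := a * (Q / R)) (by positivity)
  rw [Real.log_mul ha.ne' (by positivity), Real.log_div hQ.ne' hR.ne'] at h2
  push_cast at h1
  linarith

lemma pw_prod (d : ℕ) (hd : 2 ≤ d) (ρ N : ℝ) (R : Fin d → ℝ) (hρ : 0 < ρ) (hN : 0 < N)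
    (hR : ∀ i, 0 < R i) :
    ∑ i, Real.log (R i) - (d - 1) * Real.log ρ ≤
      Real.log N + (d-1) * ((∏ i, (R i) ^ ((1:ℝ)/(d-1))) * N ^ (-((1:ℝ)/(d-1))) / ρ - 1) := by
  have hd1 : (0:ℝ) < d - 1 := by
    have : (2:ℝ) ≤ d := by exact_mod_cast hd
    linarith
  have hp : 0 < ∏ i, (R i) ^ ((1:ℝ)/(d-1)) := Finset.prod_pos fun i _ => Real.rpow_pos_of_pos (hR i) _
  have hn : 0 < N ^ (-((1:ℝ)/(d-1))) := Real.rpow_pos_of_pos hN _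
  have h := Real.log_le_sub_one_of_pos
    (x := (∏ i, (R i) ^ ((1:ℝ)/(d-1))) * N ^ (-((1:ℝ)/(d-1))) / ρ) (by positivity)
  rw [Real.log_div (by positivity) hρ.ne', Real.log_mul hp.ne' hn.ne', Real.log_rpow hN,
    Real.log_prod (fun i _ => (Real.rpow_pos_of_pos (hR i) _).ne')] at h
  simp only [Real.log_rpow (hR _), ← Finset.mul_sum] at h
  have h2 := mul_le_mul_of_nonneg_left h hd1.le
  have : ((d:ℝ)-1) * (1/(d-1) * ∑ i, Real.log (R i) + -(1/(d-1)) * Real.log N - Real.log ρ) =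
    ∑ i, Real.log (R i) - Real.log N - (d-1) * Real.log ρ := by field_simp; try ring
  rw [this] at h2
  linarith

section
variable {d : ℕ} (f : (Fin d → ℝ) → ℝ)

noncomputable def RR (i : Fin d) (x : Fin d → ℝ) : ℝ := ∫ t, (f (Function.update x i t))^2
noncomputable def pd (i : Fin d) (x : Fin d → ℝ) : ℝ := fderiv ℝ f x (Pi.single i 1)

lemma slice_contDiff (hf : ContDiff ℝ 1 f) (i : Fin d) (x : Fin d → ℝ) :
    ContDiff ℝ 1 (fun t => f (Function.update x i t)) :=
  hf.comp (contDiff_update 1 x i)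

lemma slice_supp {f : (Fin d → ℝ) → ℝ} (hs : HasCompactSupport f) (i : Fin d) (x : Fin d → ℝ) :
    HasCompactSupport (fun t => f (Function.update x i t)) :=
  hs.comp_isClosedEmbedding (isClosedEmbedding_update x i)

lemma slice_deriv (hf : ContDiff ℝ 1 f) (i : Fin d) (x : Fin d → ℝ) (t : ℝ) :
    deriv (fun t => f (Function.update x i t)) t = pd f i (Function.update x i t) := by
  have h1 := (hf.differentiable one_ne_zero (Function.update x i t)).hasFDerivAt
  have h2 := hasDerivAt_update x i t
  exact (h1.comp_hasDerivAt t h2).deriv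

lemma pd_cont {f : (Fin d → ℝ) → ℝ} (hf : ContDiff ℝ 1 f) (i : Fin d) : Continuous (pd f i) :=
  (hf.continuous_fderiv one_ne_zero).clm_apply continuous_const

lemma pd_supp {f : (Fin d → ℝ) → ℝ} (hs : HasCompactSupport f) (i : Fin d) :
    HasCompactSupport (pd f i) := 
  (hs.fderiv ℝ).comp_left (g := fun L : (Fin d → ℝ) →L[ℝ] ℝ => L (Pi.single i 1)) (by simp)

lemma sq_supp {X : Type*} [TopologicalSpace X] {f : X → ℝ} (hs : HasCompactSupport f) :
    HasCompactSupport (fun x => (f x)^2) := hs.comp_left (g := fun y : ℝ => y^2) (by simp)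

lemma ofReal_RR {f : (Fin d → ℝ) → ℝ} (hf : Continuous f) (hs : HasCompactSupport f) (i : Fin d)
    (x : Fin d → ℝ) :
    ENNReal.ofReal (RR f i x) = ∫⁻ t, ENNReal.ofReal ((f (Function.update x i t))^2) := by
  unfold RR
  apply ofReal_integral_eq_lintegral_ofReal
  · apply Continuous.integrable_of_hasCompactSupport
    · fun_prop
    · exact sq_supp (slice_supp hs i x)
  · exact Filter.Eventually.of_forall fun t => sq_nonneg _

lemma ofReal_RR' {f : (Fin d → ℝ) → ℝ} (hf : Continuous f) (hs : HasCompactSupport f) (i : Fin d)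
    (x : Fin d → ℝ) :
    ENNReal.ofReal (RR f i x) =
      lmarginal (fun _ : Fin d => (volume : Measure ℝ)) {i} (fun x => ENNReal.ofReal ((f x)^2)) x := by
  rw [ofReal_RR hf hs, lmarginal_singleton]

lemma RR_nonneg (i : Fin d) (x : Fin d → ℝ) : 0 ≤ RR f i x := integral_nonneg fun t => sq_nonneg _

lemma RR_meas {f : (Fin d → ℝ) → ℝ} (hf : Continuous f) (hs : HasCompactSupport f) (i : Fin d) :
    Measurable (RR f i) := by
  have : RR f i = fun x => (lmarginal (fun _ : Fin d => (volume : Measure ℝ)) {i}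
      (fun x => ENNReal.ofReal ((f x)^2)) x).toReal := by
    ext x
    rw [← ofReal_RR' hf hs, ENNReal.toReal_ofReal (RR_nonneg f i x)]
  rw [this]
  apply Measurable.ennreal_toReal
  apply Measurable.lmarginal
  fun_prop

lemma RR_pos {f : (Fin d → ℝ) → ℝ} (hf : Continuous f) (hs : HasCompactSupport f) (i : Fin d)
    (x : Fin d → ℝ) (hx : f x ≠ 0) : 0 < RR f i x := by
  unfold RR
  apply Continuous.integral_pos_of_hasCompactSupport_nonneg_nonzero (x := x i)
  · fun_prop
  · exact sq_supp (slice_supp hs i x)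
  · intro t; exact sq_nonneg _
  · simpa using hx

lemma agmon_d {f : (Fin d → ℝ) → ℝ} (hf : ContDiff ℝ 1 f) (hs : HasCompactSupport f) (i : Fin d)
    (x : Fin d → ℝ) : ((f x)^2)^2 ≤ RR f i x * RR (pd f i) i x := by
  have := agmon _ (slice_contDiff f hf i x) (slice_supp hs i x) (x i)
  simp only [slice_deriv f hf] at this
  simpa [RR] using this

lemma T_int {f : (Fin d → ℝ) → ℝ} (hf : ContDiff ℝ 1 f) (hs : HasCompactSupport f) (i : Fin d) :
    Integrable (fun x => (f x)^2 * (RR (pd f i) i x / RR f i x)) ∧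
     ∫ x, (f x)^2 * (RR (pd f i) i x / RR f i x) ≤ ∫ x, (pd f i x)^2 := by
  have hc := hf.continuous
  have hpc := pd_cont hf i
  have hps := pd_supp hs i
  have mR := RR_meas hc hs i
  have mQ := RR_meas hpc hps i
  refine nn_helper _ (by fun_prop) (fun x => ?_) _ (integral_nonneg fun t => sq_nonneg _) ?_
  · exact mul_nonneg (sq_nonneg _) (div_nonneg (RR_nonneg _ _ _) (RR_nonneg _ _ _))
  rw [ofReal_integral_eq_lintegral_ofReal (f := fun x => (pd f i x)^2) ((hpc.pow 2).integrable_of_hasCompactSupport (sq_supp hps))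
    (Filter.Eventually.of_forall fun t => sq_nonneg _)]
  apply lintegral_le_of_lmarginal_le (μ := fun _ : Fin d => (volume : Measure ℝ)) {i}
  · fun_prop
  · fun_prop
  intro x
  rw [← ofReal_RR' hpc hps, lmarginal_singleton]
  have up : ∀ (g : (Fin d → ℝ) → ℝ) t, RR g i (Function.update x i t) = RR g i x := by
    intro g t; simp [RR]
  simp only [up]
  have e : ∀ t : ℝ, ENNReal.ofReal (f (Function.update x i t) ^ 2 * (RR (pd f i) i x / RR f i x)) =
      ENNReal.ofReal (f (Function.update x i t) ^ 2) * ENNReal.ofReal (RR (pd f i) i x / RR f i x) :=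
    fun t => ENNReal.ofReal_mul (sq_nonneg _)
  simp only [e]
  rw [lintegral_mul_const _ (by fun_prop), ← ofReal_RR hc hs, ← ENNReal.ofReal_mul (RR_nonneg _ _ _)]
  apply ENNReal.ofReal_le_ofReal
  rcases (RR_nonneg f i x).eq_or_lt with h | h
  · rw [← h]; simpa using RR_nonneg (pd f i) i x
  · rw [mul_div_cancel₀ _ h.ne']

lemma P_int {f : (Fin d → ℝ) → ℝ} (hd : 2 ≤ d) (hf : Continuous f) (hs : HasCompactSupport f) :
    Integrable (fun x => ∏ i, (RR f i x) ^ ((1:ℝ)/(d-1))) ∧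
     ∫ x, ∏ i, (RR f i x) ^ ((1:ℝ)/(d-1)) ≤ (∫ x, (f x)^2) ^ ((d:ℝ)/(d-1)) := by
  have hd1 : (1:ℝ) < d := by exact_mod_cast hd
  have hd0 : (0:ℝ) < d - 1 := by linarith
  have mR := RR_meas hf hs
  have hN : 0 ≤ ∫ x, (f x)^2 := integral_nonneg fun t => sq_nonneg _
  refine nn_helper _ (by fun_prop) (fun x => ?_) _ (Real.rpow_nonneg hN _) ?_
  · exact Finset.prod_nonneg fun i _ => Real.rpow_nonneg (RR_nonneg _ _ _) _
  have hp : Real.HolderConjugate (Fintype.card (Fin d) : ℝ) ((d:ℝ)/(d-1)) := by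
    rw [Fintype.card_fin]
    exact Real.HolderConjugate.conjExponent hd1
  have := lintegral_prod_lintegral_pow_le (μ := fun _ : Fin d => (volume : Measure ℝ)) hp
    (f := fun x => ENNReal.ofReal ((f x)^2)) (by fun_prop)
  rw [← ENNReal.ofReal_rpow_of_nonneg hN (by positivity),
    ofReal_integral_eq_lintegral_ofReal (f := fun x => (f x)^2) ((hf.pow 2).integrable_of_hasCompactSupport (sq_supp hs))
    (Filter.Eventually.of_forall fun t => sq_nonneg _)]
  refine le_trans (le_of_eq ?_) this
  apply lintegral_congr
  intro x
  rw [ENNReal.ofReal_prod_of_nonneg fun i _ => Real.rpow_nonneg (RR_nonneg _ _ _) _]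
  apply Finset.prod_congr rfl
  intro i _
  rw [← ofReal_RR hf hs, Fintype.card_fin, ENNReal.ofReal_rpow_of_nonneg (RR_nonneg _ _ _) (by positivity)]

end

lemma RR_one (f : (Fin 1 → ℝ) → ℝ) (x : Fin 1 → ℝ) : RR f 0 x = ∫ x, (f x)^2 := by
  have e := (volume_preserving_funUnique (Fin 1) ℝ).symm.integral_comp
    (MeasurableEquiv.measurableEmbedding _) (fun x => (f x)^2)
  refine Eq.trans ?_ (e.trans (by congr))
  rw [RR]
  congr 1; ext t; congr 2; ext j
  have : j = 0 := Subsingleton.elim _ _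
  subst this
  rw [Function.update_self]
  rfl

lemma han {d : ℕ} (hd : 1 ≤ d) (f : (Fin d → ℝ) → ℝ) (hc : Continuous f)
    (hs : HasCompactSupport f) (N : ℝ) (hNdef : N = ∫ x, (f x)^2) (hN : 0 < N) :
    ∃ G : (Fin d → ℝ) → ℝ, Integrable G ∧ ∫ x, G x ≤ N * Real.log N ∧
      ∀ x, (f x)^2 * (∑ i, Real.log (RR f i x) - (d-1) * Real.log ((f x)^2)) ≤ G x := by
  have iρ : Integrable (fun x => (f x)^2) := (hc.pow 2).integrable_of_hasCompactSupport (sq_supp hs)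
  rcases hd.eq_or_lt with h1 | h2
  · subst h1
    refine ⟨fun x => (f x)^2 * Real.log N, iρ.mul_const _, by rw [integral_mul_const, ← hNdef], ?_⟩
    intro x
    have := RR_one f x
    rw [← hNdef] at this
    simp [this]
  · have hd1 : (1:ℝ) < d := by exact_mod_cast h2
    have hd0 : (0:ℝ) < d - 1 := by linarith
    obtain ⟨iP, bP⟩ := P_int h2 hc hs
    rw [← hNdef] at bP
    set c : ℝ := N ^ (-((1:ℝ)/(d-1))) with hcdef
    have hc0 : 0 ≤ c := Real.rpow_nonneg hN.le _
    have i1 : Integrable (fun x => (f x)^2 * (Real.log N - (d-1))) := iρ.mul_const _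
    have i2 : Integrable (fun x => ((d-1) * c) * (∏ i, (RR f i x) ^ ((1:ℝ)/(d-1)))) := iP.const_mul _
    refine ⟨fun x => (f x)^2 * (Real.log N - (d-1)) + ((d-1) * c) * 
        (∏ i, (RR f i x) ^ ((1:ℝ)/(d-1))), i1.add i2, ?_, ?_⟩
    · rw [integral_add i1 i2, integral_mul_const, integral_const_mul, ← hNdef]
      have h4 := mul_le_mul_of_nonneg_left bP (mul_nonneg hd0.le hc0)
      have h5 : ((d:ℝ)-1) * c * N ^ ((d:ℝ)/(d-1)) = (d-1) * N := by
        rw [mul_assoc, ← Real.rpow_add hN]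
        have : -((1:ℝ)/(d-1)) + (d:ℝ)/(d-1) = 1 := by
          rw [← neg_div, ← add_div, div_eq_one_iff_eq hd0.ne']; ring
        rw [this, Real.rpow_one]
      linarith
    · intro x
      rcases eq_or_ne (f x) 0 with hx | hx
      · simp only [hx]
        have : 0 ≤ ∏ i, (RR f i x) ^ ((1:ℝ)/(d-1)) :=
          Finset.prod_nonneg fun i _ => Real.rpow_nonneg (RR_nonneg _ _ _) _
        have := mul_nonneg (mul_nonneg hd0.le hc0) this
        simpa using this
      have hρ : 0 < (f x)^2 := by positivity
      have h := pw_prod d h2 _ N (fun i => RR f i x) hρ hN (fun i => RR_pos hc hs i x hx)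
      have := mul_le_mul_of_nonneg_left h hρ.le
      refine this.trans (le_of_eq ?_)
      rw [← hcdef]
      beta_reduce
      generalize (∏ i, (RR f i x) ^ ((1:ℝ)/(d-1))) = P
      field_simp
      try ring

lemma ls_pi_s2 {d : ℕ} (hd : 1 ≤ d) (f : (Fin d → ℝ) → ℝ) (hf : ContDiff ℝ 1 f)
    (hs : HasCompactSupport f) (a : ℝ) (ha : 0 < a) (hN : 0 < ∫ x, (f x)^2) :
    ∫ x, (f x)^2 * Real.log ((f x)^2) ≤ (∫ x, (f x)^2) * Real.log (∫ x, (f x)^2)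
      + a / 2 * (∑ i, ∫ x, (pd f i x)^2) - d / 2 * (1 + Real.log a) * ∫ x, (f x)^2 := by
  have hc := hf.continuous
  have iρ : Integrable (fun x => (f x)^2) := (hc.pow 2).integrable_of_hasCompactSupport (sq_supp hs)
  have cl : Continuous (fun x => (f x)^2 * Real.log ((f x)^2)) := by
    have h : Continuous (fun x => (f x)^2) := hc.pow 2
    exact Real.continuous_mul_log.comp h
  have sl : HasCompactSupport (fun x => (f x)^2 * Real.log ((f x)^2)) := (sq_supp hs).mul_right
  have il := cl.integrable_of_hasCompactSupport (μ := volume) sl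
  have iT : Integrable (fun x => ∑ i, (f x)^2 * (RR (pd f i) i x / RR f i x)) :=
    integrable_finsetSum _ fun i _ => (T_int hf hs i).1
  have bT : ∫ x, ∑ i, (f x)^2 * (RR (pd f i) i x / RR f i x) ≤ ∑ i, ∫ x, (pd f i x)^2 := by
    rw [integral_finsetSum _ fun i _ => (T_int hf hs i).1]
    exact Finset.sum_le_sum fun i _ => (T_int hf hs i).2
  obtain ⟨G, iG, bG, hG⟩ := han hd f hc hs _ rfl hN
  have i1 : Integrable (fun x => a/2 * (∑ i, (f x)^2 * (RR (pd f i) i x / RR f i x))) :=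
    iT.const_mul _
  have i2 : Integrable (fun x => d / 2 * (1 + Real.log a) * (f x)^2) := iρ.const_mul _
  have i12 : Integrable (fun x => a/2 * (∑ i, (f x)^2 * (RR (pd f i) i x / RR f i x)) 
        - d / 2 * (1 + Real.log a) * (f x)^2) := i1.sub i2
  have main : ∫ x, (f x)^2 * Real.log ((f x)^2) ≤
      ∫ x, ((a/2 * (∑ i, (f x)^2 * (RR (pd f i) i x / RR f i x)) 
        - d / 2 * (1 + Real.log a) * (f x)^2) + G x) := by
    apply integral_mono il (i12.add iG)
    intro x
    show (f x)^2 * Real.log ((f x)^2) ≤ (a/2 * (∑ i, (f x)^2 * (RR (pd f i) i x / RR f i x)) 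
        - d / 2 * (1 + Real.log a) * (f x)^2) + G x
    have hGx := hG x
    rcases eq_or_ne (f x) 0 with hx | hx
    · simp only [hx] at hGx ⊢
      simpa using hGx
    have hρ : 0 < (f x)^2 := by positivity
    have h1 : ∑ i, (Real.log ((f x)^2) - Real.log (RR f i x)) ≤
        ∑ i, (a / 2 * (RR (pd f i) i x / RR f i x) - (1 + Real.log a) / 2) :=
      Finset.sum_le_sum fun i _ => pw_i _ _ _ a hρ (RR_pos hc hs i x hx) (agmon_d hf hs i x) ha
    rw [Finset.sum_sub_distrib, Finset.sum_sub_distrib, ← Finset.mul_sum] at h1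
    simp only [Finset.sum_const, Finset.card_univ, Fintype.card_fin, nsmul_eq_mul] at h1
    have h2 := mul_le_mul_of_nonneg_left h1 hρ.le
    rw [← Finset.mul_sum]
    linarith
  rw [integral_add i12 iG, integral_sub i1 i2, integral_const_mul, integral_const_mul] at main
  have := mul_le_mul_of_nonneg_left bT (by positivity : 0 ≤ a/2)
  linarith

lemma ls_euc {d : ℕ} (hd : 1 ≤ d) (w : EuclideanSpace ℝ (Fin d) → ℝ) (hw : ContDiff ℝ 1 w)
    (hs : HasCompactSupport w) (ε : ℝ) (hε : 0 < ε) (hN : 0 < ∫ x, (w x)^2) :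
    ∫ x, (w x)^2 * Real.log |w x| ≤ ε * (∫ x, ‖fderiv ℝ w x‖ ^ 2)
      + (d / 4 : ℝ) * Real.log (1 / ε) * (∫ x, (w x)^2)
      + (∫ x, (w x)^2) * Real.log (Real.sqrt (∫ x, (w x)^2)) := by
  let L := (PiLp.continuousLinearEquiv 2 ℝ (fun _ : Fin d => ℝ)).symm
  have tr : ∀ F : EuclideanSpace ℝ (Fin d) → ℝ, ∫ x, F (L x) = ∫ x, F x := fun F =>
    (PiLp.volume_preserving_toLp (Fin d)).integral_comp
      (MeasurableEquiv.toLp 2 (Fin d → ℝ)).measurableEmbedding F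
  let f : (Fin d → ℝ) → ℝ := fun x => w (L x)
  have hf : ContDiff ℝ 1 f := hw.comp L.contDiff
  have hfs : HasCompactSupport f := hs.comp_homeomorph L.toHomeomorph
  have e1 : ∫ x, (f x)^2 = ∫ x, (w x)^2 := tr (fun x => (w x)^2)
  have e2 : ∫ x, (f x)^2 * Real.log ((f x)^2) = 2 * ∫ x, (w x)^2 * Real.log |w x| := by
    rw [tr (fun x => (w x)^2 * Real.log ((w x)^2)), ← integral_const_mul]
    congr 1; ext x
    rw [Real.log_pow, Real.log_abs]; push_cast; ring
  have hpd : ∀ i x, pd f i x = fderiv ℝ w (L x) (EuclideanSpace.single i 1) := by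
    intro i x
    have h1 := (hw.differentiable one_ne_zero (L x)).hasFDerivAt
    have h2 := (h1.comp x L.hasFDerivAt).fderiv
    show fderiv ℝ (w ∘ L) x (Pi.single i 1) = _
    rw [h2]
    rfl
  have hsum : ∀ l : EuclideanSpace ℝ (Fin d) →L[ℝ] ℝ,
      ∑ i, (l (EuclideanSpace.single i 1))^2 = ‖l‖^2 := by
    intro l
    obtain ⟨g, rfl⟩ := (InnerProductSpace.toDual ℝ _).surjective l
    rw [LinearIsometryEquiv.norm_map, EuclideanSpace.norm_sq_eq]
    simp [EuclideanSpace.inner_single_right]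
  have e3 : ∑ i, ∫ x, (pd f i x)^2 = ∫ x, ‖fderiv ℝ w x‖ ^ 2 := by
    rw [← integral_finsetSum]
    · rw [← tr (fun x => ‖fderiv ℝ w x‖ ^ 2)]
      congr 1; ext x
      simp only [hpd, hsum]
    · intro i _
      exact ((pd_cont hf i).pow 2).integrable_of_hasCompactSupport (sq_supp (pd_supp hfs i))
  have h := ls_pi_s2 hd f hf hfs (4 * ε) (by positivity) (by rw [e1]; exact hN)
  rw [e1, e2, e3, Real.log_mul (by norm_num) hε.ne'] at h
  rw [Real.log_sqrt hN.le, one_div, Real.log_inv]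
  have h4 : 0 ≤ Real.log 4 := Real.log_nonneg (by norm_num)
  have h5 : 0 ≤ (d:ℝ) / 2 * (1 + Real.log 4) * ∫ x, (w x)^2 := by positivity
  linarith

lemma holder_aux {X : Type*} [MeasurableSpace X] [TopologicalSpace X] [BorelSpace X] 
    [SecondCountableTopology X]
    {μ : Measure X} [IsFiniteMeasureOnCompacts μ] (f g : X → ℝ)
    (hf : Continuous f) (hg : Continuous g) (hfs : HasCompactSupport f) (hgs : HasCompactSupport g)
    (α : ℝ) (h0 : 0 < α) (h1 : α < 1) :
    Integrable (fun x => ((f x)^2)^(1-α) * ((g x)^2)^α) μ ∧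
    ∫ x, ((f x)^2)^(1-α) * ((g x)^2)^α ∂μ ≤ (∫ x, (f x)^2 ∂μ)^(1-α) * (∫ x, (g x)^2 ∂μ)^α := by
  have h1' : 0 < 1 - α := by linarith
  have cf : Continuous (fun x => ((f x)^2)^(1-α)) :=
    (hf.pow 2).rpow_const fun x => Or.inr h1'.le
  have cg : Continuous (fun x => ((g x)^2)^α) := (hg.pow 2).rpow_const fun x => Or.inr h0.le
  have sf : HasCompactSupport (fun x => ((f x)^2)^(1-α)) :=
    hfs.comp_left (g := fun y : ℝ => (y^2)^(1-α)) (by simp [Real.zero_rpow h1'.ne'])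
  have sg : HasCompactSupport (fun x => ((g x)^2)^α) :=
    hgs.comp_left (g := fun y : ℝ => (y^2)^α) (by simp [Real.zero_rpow h0.ne'])
  refine ⟨(cf.mul cg).integrable_of_hasCompactSupport sf.mul_right, ?_⟩
  have := integral_mul_le_Lp_mul_Lq_of_nonneg (μ := μ) (p := 1/(1-α)) (q := 1/α)
    (f := fun x => ((f x)^2)^(1-α)) (g := fun x => ((g x)^2)^α)
    ⟨by simp, by positivity, by positivity⟩
    (Filter.Eventually.of_forall fun x => by positivity)
    (Filter.Eventually.of_forall fun x => by positivity)
    (cf.memLp_of_hasCompactSupport sf) (cg.memLp_of_hasCompactSupport sg)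
  have e1 : ∀ x, (((f x)^2)^(1-α))^(1/(1-α)) = (f x)^2 := fun x => by
    rw [← Real.rpow_mul (sq_nonneg _), mul_one_div_cancel h1'.ne', Real.rpow_one]
  have e2 : ∀ x, (((g x)^2)^α)^(1/α) = (g x)^2 := fun x => by
    rw [← Real.rpow_mul (sq_nonneg _), mul_one_div_cancel h0.ne', Real.rpow_one]
  simpa only [e1, e2, one_div_one_div] using this

/-- For smooth compactly supported `u, v : ℝ^d → ℝ`, `ε > 0` and `α ∈ (0,1)`:
`∫ (u log|u| − v log|v|)(u − v) ≤ ε ‖u−v‖_V² + (1 + (d/4) log(1/ε)) ‖u−v‖²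
  + ‖u−v‖² log‖u−v‖ + (1/(2(1−α)e)) (‖u‖^{2(1−α)} + ‖v‖^{2(1−α)}) ‖u−v‖^{2α}`. -/
theorem log_nonlinearity_difference_estimate
    (d : ℕ) (hd : 1 ≤ d)
    (u v : EuclideanSpace ℝ (Fin d) → ℝ)
    (hu : ContDiff ℝ (⊤ : ℕ∞) u) (husupp : HasCompactSupport u)
    (hv : ContDiff ℝ (⊤ : ℕ∞) v) (hvsupp : HasCompactSupport v)
    (ε : ℝ) (hε : 0 < ε) (α : ℝ) (hα0 : 0 < α) (hα1 : α < 1) :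
    (∫ x, (u x * Real.log |u x| - v x * Real.log |v x|) * (u x - v x)) ≤
      ε * (∫ x, ‖fderiv ℝ (fun y => u y - v y) x‖ ^ 2)
        + (1 + (d / 4 : ℝ) * Real.log (1 / ε)) * (∫ x, (u x - v x) ^ 2)
        + (∫ x, (u x - v x) ^ 2) * Real.log (Real.sqrt (∫ x, (u x - v x) ^ 2))
        + (1 / (2 * (1 - α) * Real.exp 1)) *
            ((∫ x, u x ^ 2) ^ (1 - α) + (∫ x, v x ^ 2) ^ (1 - α)) *
            (∫ x, (u x - v x) ^ 2) ^ α := by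
  have hu1 : ContDiff ℝ 1 u := hu.of_le (by exact_mod_cast le_top)
  have hv1 : ContDiff ℝ 1 v := hv.of_le (by exact_mod_cast le_top)
  have cu := hu.continuous
  have cv := hv.continuous
  have hw : ContDiff ℝ 1 (fun y => u y - v y) := hu1.sub hv1
  have cw : Continuous (fun y => u y - v y) := cu.sub cv
  have sw : HasCompactSupport (fun y => u y - v y) := husupp.sub hvsupp
  have hα1' : 0 < 1 - α := by linarith
  have hN0 : 0 ≤ ∫ x, (u x - v x) ^ 2 := integral_nonneg fun x => sq_nonneg _
  rcases hN0.eq_or_lt with hN | hN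
  · have hz : ∀ x, u x - v x = 0 := by
      by_contra! hne
      obtain ⟨x, hx⟩ := hne
      have := Continuous.integral_pos_of_hasCompactSupport_nonneg_nonzero
        (μ := (volume : Measure (EuclideanSpace ℝ (Fin d))))
        (f := fun x => (u x - v x)^2) (x := x) (cw.pow 2) (sq_supp sw)
        (fun x => sq_nonneg _) (by simpa using hx)
      linarith
    simp [hz, Real.zero_rpow hα0.ne']
  have hls := ls_euc hd _ hw sw ε hε hN
  obtain ⟨iu, bu⟩ := holder_aux (μ := volume) u _ cu cw husupp sw α hα0 hα1
  obtain ⟨iv, bv⟩ := holder_aux (μ := volume) v _ cv cw hvsupp sw α hα0 hα1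
  have mulog : Continuous (fun y : ℝ => y * Real.log |y|) := by
    simpa only [Real.log_abs] using Real.continuous_mul_log
  have mulog2 : Continuous (fun y : ℝ => y ^ 2 * Real.log |y|) := by
    have := continuous_id.mul mulog
    refine this.congr fun y => ?_
    simp only [id, Pi.mul_apply]; ring
  have i0 : Integrable (fun x => (u x * Real.log |u x| - v x * Real.log |v x|) * (u x - v x)) :=
    (((mulog.comp cu).sub (mulog.comp cv)).mul cw).integrable_of_hasCompactSupport sw.mul_left
  have i1 : Integrable (fun x => (u x - v x)^2 * Real.log |u x - v x|) :=
    (mulog2.comp cw).integrable_of_hasCompactSupport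
      (sw.comp_left (g := fun y : ℝ => y ^ 2 * Real.log |y|) (by simp))
  have i2 : Integrable (fun x => (u x - v x)^2) :=
    (cw.pow 2).integrable_of_hasCompactSupport (sq_supp sw)
  have i12 : Integrable (fun x => (u x - v x)^2 * Real.log |u x - v x| + (u x - v x)^2) := i1.add i2
  have i3 : Integrable (fun x => 1 / (2 * (1 - α) * Real.exp 1) *
      ((u x ^ 2) ^ (1-α) * ((u x - v x)^2)^α + (v x ^ 2) ^ (1-α) * ((u x - v x)^2)^α)) :=
    (iu.add iv).const_mul _
  have main := integral_mono i0 (i12.add i3) (fun x => pw (u x) (v x) α hα0 hα1)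
  simp only [Pi.add_apply] at main
  rw [integral_add i12 i3, integral_add i1 i2, integral_const_mul, integral_add iu iv] at main
  have hc : 0 ≤ 1 / (2 * (1 - α) * Real.exp 1) := by positivity
  have h3 := mul_le_mul_of_nonneg_left (add_le_add bu bv) hc
  linarith
end

section
/- Let d ≥ 1, let D ⊆ ℝ^d be a bounded measurable set of Lebesgue measure m(D), and let u, v : ℝ^d → ℝ be smooth functions with compact support contained in D. Then for every ε > 0 and every α ∈ (0,1): ∫_D |u(x) − v(x)|² · log₊( max(|u(x)|, |v(x)|) ) dx ≤ ε ∫ |∇(u−v)(x)|² dx + (d/4)·log(1/ε) · ‖u − v‖² + ‖u − v‖² · log‖u − v‖ + (1/(2(1−α)e)) · (‖u‖^{2(1−α)} + ‖v‖^{2(1−α)}) · ‖u − v‖^{2α} + (1/(2(1−α)e)) · (4 m(D))^{1−α} · ‖u − v‖^{2α}, where ‖·‖ denotes the L² norm and ‖u−v‖² log‖u−v‖ is interpreted as 0 when u = v. -/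
open MeasureTheory Function

lemma oneD (φ : ℝ → ℝ) (h : ContDiff ℝ 1 φ) (hc : HasCompactSupport φ) (s : ℝ) (hs : 0 < s) (t : ℝ) :
    ENNReal.ofReal (φ t ^ 2) ≤ ENNReal.ofReal s * (∫⁻ r, ENNReal.ofReal (φ r ^ 2))
      + ENNReal.ofReal (1 / s) * (∫⁻ r, ENNReal.ofReal (deriv φ r ^ 2)) := by
  have h1 : ContDiff ℝ 1 (fun r => φ r ^ 2) := h.pow 2
  have h2 : HasCompactSupport (fun r => φ r ^ 2) :=
    hc.comp_left (g := fun y : ℝ => y ^ 2) (by simp)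
  have hd : ∀ r, deriv (fun r => φ r ^ 2) r = 2 * φ r * deriv φ r := by
    intro r
    have := ((h.differentiable (by norm_num)) r).hasDerivAt.pow 2
    have h3 := this.deriv
    simp only [Nat.cast_ofNat, Nat.add_one_sub_one, pow_one] at h3
    exact h3
  have hm1 : Measurable fun r => ENNReal.ofReal (φ r ^ 2) := by
    have := h.continuous
    fun_prop
  have hm2 : Measurable fun r => ENNReal.ofReal (deriv φ r ^ 2) := by
    have := measurable_deriv φ
    fun_prop
  calc ENNReal.ofReal (φ t ^ 2) = ‖(fun r => φ r ^ 2) t‖ₑ := by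
        rw [Real.enorm_eq_ofReal (by positivity)]
    _ ≤ ∫⁻ r in Set.Iic t, ‖deriv (fun r => φ r ^ 2) r‖ₑ := h2.enorm_le_lintegral_Ici_deriv h1 t
    _ ≤ ∫⁻ r, ‖deriv (fun r => φ r ^ 2) r‖ₑ := setLIntegral_le_lintegral _ _
    _ ≤ ∫⁻ r, (ENNReal.ofReal s * ENNReal.ofReal (φ r ^ 2)
          + ENNReal.ofReal (1 / s) * ENNReal.ofReal (deriv φ r ^ 2)) := by
        gcongr with r
        rw [hd, ← ENNReal.ofReal_mul hs.le, ← ENNReal.ofReal_mul (by positivity),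
          ← ENNReal.ofReal_add (by positivity) (by positivity), ← ofReal_norm]
        apply ENNReal.ofReal_le_ofReal
        rw [Real.norm_eq_abs, abs_le]
        have e1 : 0 ≤ (1 / s) * (s * φ r - deriv φ r) ^ 2 := by positivity
        have e2 : 0 ≤ (1 / s) * (s * φ r + deriv φ r) ^ 2 := by positivity
        have e3 : (1 / s) * (s * φ r - deriv φ r) ^ 2
          = s * φ r ^ 2 + 1 / s * deriv φ r ^ 2 - 2 * φ r * deriv φ r := by field_simp; ring
        have e4 : (1 / s) * (s * φ r + deriv φ r) ^ 2
          = s * φ r ^ 2 + 1 / s * deriv φ r ^ 2 + 2 * φ r * deriv φ r := by field_simp; ring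
        constructor <;> linarith
    _ = _ := by
        rw [lintegral_add_left (by fun_prop), lintegral_const_mul _ hm1, lintegral_const_mul _ hm2]

lemma lsi_pointwise (d : ℕ) (hd : 1 ≤ d) (f N ε : ℝ) (hf : 0 < f) (hN : 0 < N) (hε : 0 < ε)
    (a b : Fin d → ℝ) (ha : ∀ i, 0 < a i) (hb : ∀ i, 0 ≤ b i)
    (h : ∀ i, f ≤ (1 / √ε) * a i + (1 / (1 / √ε)) * b i) (q : ℝ)
    (hq : q = f ^ (1 - ((d : ℝ) - 1) * (1 / d)) * ∏ i, a i ^ ((1 : ℝ) / d)) :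
    f * Real.log f ≤ d * (q / N ^ ((1 : ℝ) / d) - f) + f * Real.log N
      + d / 2 * Real.log (1 / ε) * f + ε * ∑ i, f * (b i / a i) := by
  have hd0 : (0 : ℝ) < d := by exact_mod_cast hd
  have hs : 0 < √ε := Real.sqrt_pos.2 hε
  have hss : √ε * √ε = ε := Real.mul_self_sqrt hε.le
  have h1 : ∀ i, Real.log f ≤ Real.log (a i) + 1 / 2 * Real.log (1 / ε) + ε * (b i / a i) := by
    intro i
    have hr : 0 ≤ ε * (b i / a i) := mul_nonneg hε.le (div_nonneg (hb i) (ha i).le)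
    have e : (1 / √ε) * a i + (1 / (1 / √ε)) * b i = a i * (1 / √ε) * (1 + ε * (b i / a i)) := by
      have := ha i
      have e5 : ε = √ε ^ 2 := by rw [sq]; exact hss.symm
      generalize √ε = s at *
      subst e5
      field_simp
    have h2 := Real.log_le_log hf (h i)
    rw [e, Real.log_mul (by have := ha i; positivity) (by positivity),
      Real.log_mul (ha i).ne' (by positivity)] at h2
    have h3 := Real.log_le_sub_one_of_pos (x := 1 + ε * (b i / a i)) (by positivity)
    have h4 : Real.log (1 / √ε) = 1 / 2 * Real.log (1 / ε) := by
      simp only [one_div, Real.log_inv, Real.log_sqrt hε.le]; ring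
    linarith
  have hsum := Finset.sum_le_sum (fun i (_ : i ∈ Finset.univ) => h1 i)
  simp only [Finset.sum_add_distrib, Finset.sum_const, Finset.card_univ, Fintype.card_fin,
    nsmul_eq_mul, ← Finset.mul_sum] at hsum
  have hp : 0 < ∏ i, a i ^ ((1 : ℝ) / d) :=
    Finset.prod_pos fun i _ => Real.rpow_pos_of_pos (ha i) _
  have hq0 : 0 < q := by rw [hq]; positivity
  have hlq : d * Real.log q = Real.log f + ∑ i, Real.log (a i) := by
    rw [hq, Real.log_mul (by positivity) hp.ne', Real.log_rpow hf,
      Real.log_prod (fun i _ => (Real.rpow_pos_of_pos (ha i) _).ne')]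
    simp only [Real.log_rpow (ha _), ← Finset.mul_sum]
    field_simp
    ring
  have hNp : 0 < N ^ ((1 : ℝ) / d) := by positivity
  have h5 := Real.log_le_sub_one_of_pos (x := q / N ^ ((1 : ℝ) / d) / f) (by positivity)
  rw [Real.log_div (by positivity) hf.ne', Real.log_div hq0.ne' hNp.ne', Real.log_rpow hN] at h5
  have h6 := mul_le_mul_of_nonneg_left h5 hd0.le
  have h7 : d * (Real.log q - 1 / d * Real.log N - Real.log f)
      = d * Real.log q - Real.log N - d * Real.log f := by field_simp
  rw [h7] at h6
  have h8 : Real.log f ≤ d * (q / N ^ ((1 : ℝ) / d) / f - 1) + Real.log N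
      + d / 2 * Real.log (1 / ε) + ε * ∑ i, b i / a i := by linarith
  have h9 := mul_le_mul_of_nonneg_left h8 hf.le
  refine h9.trans (le_of_eq ?_)
  rw [← Finset.mul_sum]
  field_simp

theorem lsi_pi (d : ℕ) (hd : 1 ≤ d) (w : (Fin d → ℝ) → ℝ) (hw : ContDiff ℝ 1 w)
    (hc : HasCompactSupport w) (ε : ℝ) (hε : 0 < ε) :
    ∫ x, w x ^ 2 * Real.log (w x ^ 2) ≤
      (∫ x, w x ^ 2) * Real.log (∫ x, w x ^ 2) + d / 2 * Real.log (1 / ε) * (∫ x, w x ^ 2)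
      + ε * ∑ i, ∫ x, (fderiv ℝ w x (Pi.single i 1)) ^ 2 := by
  classical
  have hd0 : (0 : ℝ) < d := by exact_mod_cast hd
  set f : (Fin d → ℝ) → ℝ := fun x => w x ^ 2 with hfdef
  set g : Fin d → (Fin d → ℝ) → ℝ := fun i x => (fderiv ℝ w x (Pi.single i 1)) ^ 2 with hgdef
  have hf0 : ∀ x, 0 ≤ f x := fun x => sq_nonneg _
  have hg0 : ∀ i x, 0 ≤ g i x := fun i x => sq_nonneg _
  have hfc : Continuous f := hw.continuous.pow 2
  have hgc : ∀ i, Continuous (g i) := fun i =>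
    ((hw.continuous_fderiv (by norm_num)).clm_apply continuous_const).pow 2
  have hfs : HasCompactSupport f := hc.comp_left (g := fun y : ℝ => y ^ 2) (by simp)
  have hgs : ∀ i, HasCompactSupport (g i) := fun i =>
    (hc.fderiv (𝕜 := ℝ)).comp_left (g := fun L : (Fin d → ℝ) →L[ℝ] ℝ => (L (Pi.single i 1)) ^ 2)
      (by simp)
  have hfi : Integrable f := hfc.integrable_of_hasCompactSupport hfs
  have hgi : ∀ i, Integrable (g i) := fun i => (hgc i).integrable_of_hasCompactSupport (hgs i)
  set A : Fin d → (Fin d → ℝ) → ENNReal :=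
    fun i x => ∫⁻ t, ENNReal.ofReal (f (update x i t)) with hA
  set B : Fin d → (Fin d → ℝ) → ENNReal :=
    fun i x => ∫⁻ t, ENNReal.ofReal (g i (update x i t)) with hB
  have hup : ∀ (i : Fin d), Continuous fun p : (Fin d → ℝ) × ℝ => update p.1 i p.2 := by
    intro i; exact continuous_fst.update i continuous_snd
  have hAm : ∀ i, Measurable (A i) := by
    intro i
    have : Measurable fun p : (Fin d → ℝ) × ℝ => ENNReal.ofReal (f (update p.1 i p.2)) :=
      (hfc.comp (hup i)).measurable.ennreal_ofReal
    exact this.lintegral_prod_right'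
  have hBm : ∀ i, Measurable (B i) := by
    intro i
    have : Measurable fun p : (Fin d → ℝ) × ℝ => ENNReal.ofReal (g i (update p.1 i p.2)) :=
      ((hgc i).comp (hup i)).measurable.ennreal_ofReal
    exact this.lintegral_prod_right'
  have hsec : ∀ (h : (Fin d → ℝ) → ℝ), Continuous h → HasCompactSupport h → ∀ x i,
      Integrable fun t => h (update x i t) := by
    intro h h1 h2 x i
    exact (h1.comp (continuous_const.update i continuous_id)).integrable_of_hasCompactSupport
      (h2.comp_isClosedEmbedding (isClosedEmbedding_update x i))
  have hAt : ∀ i x, A i x ≠ ⊤ := fun i x => (hsec f hfc hfs x i).lintegral_lt_top.ne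
  have hBt : ∀ i x, B i x ≠ ⊤ := fun i x => (hsec (g i) (hgc i) (hgs i) x i).lintegral_lt_top.ne
  have hAu : ∀ i x t, A i (update x i t) = A i x := by intro i x t; simp [hA]
  have hBu : ∀ i x t, B i (update x i t) = B i x := by intro i x t; simp [hB]
  have hAp : ∀ i x, 0 < f x → 0 < (A i x).toReal := by
    intro i x hx
    have h1 : A i x = ENNReal.ofReal (∫ t, f (update x i t)) := by
      rw [ofReal_integral_eq_lintegral_ofReal (hsec f hfc hfs x i)
        (Filter.Eventually.of_forall fun t => hf0 _)]
    have h2 : 0 < ∫ t, f (update x i t) := by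
      refine Continuous.integral_pos_of_hasCompactSupport_nonneg_nonzero (x := x i)
        (hfc.comp (continuous_const.update i continuous_id))
        (hfs.comp_isClosedEmbedding (isClosedEmbedding_update x i)) (fun t => hf0 _) ?_
      simpa using hx.ne'
    rw [h1, ENNReal.toReal_ofReal h2.le]; exact h2
  have h1d : ∀ i x, f x ≤ (1 / √ε) * (A i x).toReal + (1 / (1 / √ε)) * (B i x).toReal := by
    intro i x
    have hs : 0 < 1 / √ε := by have := Real.sqrt_pos.2 hε; positivity
    have h1 := oneD (fun t => w (update x i t)) (hw.comp (by convert! contDiff_update 1 x i))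
      (hc.comp_isClosedEmbedding (isClosedEmbedding_update x i)) (1 / √ε) hs (x i)
    have hder : ∀ t, deriv (fun t => w (update x i t)) t
        = fderiv ℝ w (update x i t) (Pi.single i 1) := by
      intro t
      have := fderiv_comp_deriv (l := w) (f := update x i) t
        (hw.differentiable one_ne_zero).differentiableAt
          (hasDerivAt_update x i t).differentiableAt
      rw [deriv_update] at this
      exact this
    simp only [hder, update_eq_self] at h1
    change ENNReal.ofReal (f x) ≤ ENNReal.ofReal (1 / √ε) * A i x
      + ENNReal.ofReal (1 / (1 / √ε)) * B i x at h1
    have h2 := ENNReal.toReal_mono (by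
      have := hAt i x; have := hBt i x
      finiteness) h1
    rw [ENNReal.toReal_add (by have := hAt i x; finiteness) (by have := hBt i x; finiteness),
      ENNReal.toReal_mul, ENNReal.toReal_mul, ENNReal.toReal_ofReal (hf0 x),
      ENNReal.toReal_ofReal hs.le, ENNReal.toReal_ofReal (by positivity)] at h2
    exact h2
  -- the grid-lines function
  set N := ∫ x, f x with hN
  have hNe : ∫⁻ x, ENNReal.ofReal (f x) = ENNReal.ofReal N :=
    (ofReal_integral_eq_lintegral_ofReal hfi (Filter.Eventually.of_forall hf0)).symm
  have hN0 : 0 ≤ N := integral_nonneg hf0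
  have hfm : Measurable fun x => ENNReal.ofReal (f x) := hfc.measurable.ennreal_ofReal
  set Q : (Fin d → ℝ) → ENNReal := fun x =>
    ENNReal.ofReal (f x) ^ (1 - ((d : ℝ) - 1) * (1 / d)) * ∏ i, A i x ^ ((1 : ℝ) / d) with hQ
  have hQm : Measurable Q := by
    refine (hfm.pow_const _).mul ?_
    exact Finset.measurable_prod _ fun i _ => (hAm i).pow_const _
  have hQl : ∫⁻ x, Q x ≤ ENNReal.ofReal N ^ (1 + (1 : ℝ) / d) := by
    have := lintegral_mul_prod_lintegral_pow_le (ι := Fin d) (fun _ => (volume : Measure ℝ))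
      (p := 1 / d) (by positivity) (by
        simp only [Fintype.card_fin]; field_simp; linarith) hfm
    rw [Fintype.card_fin] at this
    rw [← hNe]
    exact this
  have hexp : 0 < 1 - ((d : ℝ) - 1) * (1 / d) := by
    have : 1 - ((d : ℝ) - 1) * (1 / d) = 1 / d := by field_simp; ring
    rw [this]; positivity
  have hQlt : ∫⁻ x, Q x ≠ ⊤ := ne_top_of_le_ne_top (by finiteness) hQl
  have hQt : ∀ x, Q x < ⊤ := by
    intro x
    refine ENNReal.mul_lt_top (ENNReal.rpow_lt_top_of_nonneg hexp.le ENNReal.ofReal_ne_top) ?_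
    exact ENNReal.prod_lt_top fun i _ =>
      ENNReal.rpow_lt_top_of_nonneg (by positivity) (hAt i x)
  have hqi : Integrable fun x => (Q x).toReal :=
    integrable_toReal_of_lintegral_ne_top hQm.aemeasurable hQlt
  have hqint : ∫ x, (Q x).toReal ≤ N ^ (1 + (1 : ℝ) / d) := by
    rw [integral_toReal hQm.aemeasurable (Filter.Eventually.of_forall hQt)]
    refine (ENNReal.toReal_mono (by finiteness) hQl).trans (le_of_eq ?_)
    rw [← ENNReal.toReal_rpow, ENNReal.toReal_ofReal hN0]
  set R : Fin d → (Fin d → ℝ) → ENNReal := fun i x =>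
    ENNReal.ofReal (f x) * (B i x / A i x) with hR
  have hRm : ∀ i, Measurable (R i) := fun i => hfm.mul ((hBm i).div (hAm i))
  have hgm : ∀ i, Measurable fun x => ENNReal.ofReal (g i x) :=
    fun i => (hgc i).measurable.ennreal_ofReal
  have hRl : ∀ i, ∫⁻ x, R i x ≤ ENNReal.ofReal (∫ x, g i x) := by
    intro i
    rw [ofReal_integral_eq_lintegral_ofReal (hgi i) (Filter.Eventually.of_forall (hg0 i))]
    refine lintegral_le_of_lmarginal_le (μ := fun _ : Fin d => (volume : Measure ℝ)) {i}
      (hRm i) (hgm i) ?_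
    rw [lmarginal_singleton, lmarginal_singleton]
    intro x
    simp only [hR, hAu, hBu]
    have hfm' : Measurable fun t => ENNReal.ofReal (f (update x i t)) :=
      hfm.comp (measurable_update x)
    rw [lintegral_mul_const _ hfm']
    change A i x * (B i x / A i x) ≤ B i x
    exact ENNReal.mul_div_le
  have hRlt : ∀ i, ∫⁻ x, R i x ≠ ⊤ := fun i => ne_top_of_le_ne_top (by finiteness) (hRl i)
  have hri : ∀ i, Integrable fun x => (R i x).toReal := fun i =>
    integrable_toReal_of_lintegral_ne_top (hRm i).aemeasurable (hRlt i)
  have hrint : ∀ i, ∫ x, (R i x).toReal ≤ ∫ x, g i x := by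
    intro i
    rw [integral_toReal (hRm i).aemeasurable (ae_lt_top (hRm i) (hRlt i))]
    refine (ENNReal.toReal_mono (by finiteness) (hRl i)).trans (le_of_eq ?_)
    rw [ENNReal.toReal_ofReal (integral_nonneg (hg0 i))]
  have hflc : Continuous fun x => f x * Real.log (f x) := Real.continuous_mul_log.comp hfc
  have hfli : Integrable fun x => f x * Real.log (f x) :=
    hflc.integrable_of_hasCompactSupport
      (hfs.comp_left (g := fun y : ℝ => y * Real.log y) (by simp))
  have hgsum : 0 ≤ ε * ∑ i, ∫ x, g i x :=
    mul_nonneg hε.le (Finset.sum_nonneg fun i _ => integral_nonneg (hg0 i))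
  rcases hN0.eq_or_lt with hN1 | hN1
  · have h0 : f =ᵐ[volume] 0 := (integral_eq_zero_iff_of_nonneg hf0 hfi).1 (hN ▸ hN1.symm)
    have h2 : ∫ x, f x * Real.log (f x) = 0 := by
      rw [integral_eq_zero_of_ae]
      filter_upwards [h0] with x hx
      simp [hx]
    rw [← hN1, h2]
    simpa using hgsum
  have key : ∀ x, f x * Real.log (f x) ≤ d * ((Q x).toReal / N ^ ((1 : ℝ) / d) - f x)
      + f x * Real.log N + d / 2 * Real.log (1 / ε) * f x + ε * ∑ i, (R i x).toReal := by
    intro x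
    rcases (hf0 x).eq_or_lt with hx | hx
    · rw [← hx]
      have h3 : 0 ≤ (Q x).toReal := ENNReal.toReal_nonneg
      have h4 : 0 ≤ ∑ i, (R i x).toReal := Finset.sum_nonneg fun i _ => ENNReal.toReal_nonneg
      simp only [zero_mul, mul_zero, add_zero, sub_zero]
      positivity
    · have := lsi_pointwise d hd (f x) N ε hx hN1 hε (fun i => (A i x).toReal)
        (fun i => (B i x).toReal) (fun i => hAp i x hx) (fun i => ENNReal.toReal_nonneg)
        (fun i => h1d i x) (Q x).toReal (by
          simp only [hQ, ENNReal.toReal_mul, ENNReal.toReal_prod, ← ENNReal.toReal_rpow,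
            ENNReal.toReal_ofReal (hf0 x)])
      simpa only [hR, ENNReal.toReal_mul, ENNReal.toReal_div,
            ENNReal.toReal_ofReal (hf0 x)] using this
  have hi1 : Integrable fun x => (d : ℝ) * ((Q x).toReal / N ^ ((1 : ℝ) / d) - f x) :=
    ((hqi.div_const _).sub hfi).const_mul _
  have hi2 : Integrable fun x => f x * Real.log N := hfi.mul_const _
  have hi3 : Integrable fun x => d / 2 * Real.log (1 / ε) * f x := hfi.const_mul _
  have hi4 : Integrable fun x => ε * ∑ i, (R i x).toReal :=
    (integrable_finsetSum _ fun i _ => hri i).const_mul _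
  have hi12 : Integrable fun x => (d : ℝ) * ((Q x).toReal / N ^ ((1 : ℝ) / d) - f x)
      + f x * Real.log N := hi1.add hi2
  have hi123 : Integrable fun x => (d : ℝ) * ((Q x).toReal / N ^ ((1 : ℝ) / d) - f x)
      + f x * Real.log N + d / 2 * Real.log (1 / ε) * f x := hi12.add hi3
  have hmono := integral_mono hfli (hi123.add hi4) key
  simp only [Pi.add_apply] at hmono
  rw [integral_add hi123 hi4, integral_add hi12 hi3,
    integral_add hi1 hi2, integral_const_mul, integral_sub (hqi.div_const _) hfi,
    integral_div, integral_mul_const, integral_const_mul, integral_const_mul,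
    integral_finsetSum _ (fun i _ => hri i)] at hmono
  have hNp : 0 < N ^ ((1 : ℝ) / d) := by positivity
  have hq2 : (∫ x, (Q x).toReal) / N ^ ((1 : ℝ) / d) - N ≤ 0 := by
    rw [sub_nonpos, div_le_iff₀ hNp]
    refine hqint.trans (le_of_eq ?_)
    rw [Real.rpow_add hN1, Real.rpow_one]
  have h10 := mul_nonpos_of_nonneg_of_nonpos hd0.le hq2
  have h11 : ε * ∑ i, ∫ x, (R i x).toReal ≤ ε * ∑ i, ∫ x, g i x :=
    mul_le_mul_of_nonneg_left (Finset.sum_le_sum fun i _ => hrint i) hε.le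
  linarith

theorem lsi_euclid (d : ℕ) (hd : 1 ≤ d) (w : EuclideanSpace ℝ (Fin d) → ℝ) (hw : ContDiff ℝ 1 w)
    (hc : HasCompactSupport w) (ε : ℝ) (hε : 0 < ε) :
    ∫ x, w x ^ 2 * Real.log (w x ^ 2) ≤
      (∫ x, w x ^ 2) * Real.log (∫ x, w x ^ 2) + d / 2 * Real.log (1 / ε) * (∫ x, w x ^ 2)
      + ε * ∫ x, ‖fderiv ℝ w x‖ ^ 2 := by
  have hmp := PiLp.volume_preserving_toLp (Fin d)
  have hme : MeasurableEmbedding (WithLp.toLp 2 : (Fin d → ℝ) → EuclideanSpace ℝ (Fin d)) :=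
    (MeasurableEquiv.toLp 2 (Fin d → ℝ)).measurableEmbedding
  let L : (Fin d → ℝ) ≃L[ℝ] EuclideanSpace ℝ (Fin d) := (EuclideanSpace.equiv (Fin d) ℝ).symm
  have hL : ∀ x, L x = WithLp.toLp 2 x := fun x => rfl
  have h1 := lsi_pi d hd (fun x => w (L x)) (hw.comp L.contDiff)
    (hc.comp_homeomorph L.toHomeomorph) ε hε
  have hfd : ∀ (i : Fin d) x, fderiv ℝ (fun x => w (L x)) x (Pi.single i 1)
      = fderiv ℝ w (L x) (EuclideanSpace.single i 1) := by
    intro i x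
    have h2 : HasFDerivAt (fun x => w (L x))
        ((fderiv ℝ w (L x)).comp (L : (Fin d → ℝ) →L[ℝ] EuclideanSpace ℝ (Fin d))) x :=
      ((hw.differentiable one_ne_zero).differentiableAt.hasFDerivAt).comp x L.hasFDerivAt
    rw [h2.fderiv]
    rfl
  simp only [hfd] at h1
  simp only [hL] at h1
  rw [hmp.integral_comp hme (fun y => w y ^ 2 * Real.log (w y ^ 2)),
    hmp.integral_comp hme (fun y => w y ^ 2)] at h1
  refine h1.trans ?_
  gcongr
  have hgc : ∀ i : Fin d, Continuous fun y => (fderiv ℝ w y (EuclideanSpace.single i 1)) ^ 2 :=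
    fun i => ((hw.continuous_fderiv (by norm_num)).clm_apply continuous_const).pow 2
  have hgs : ∀ i : Fin d,
      HasCompactSupport fun y => (fderiv ℝ w y (EuclideanSpace.single i 1)) ^ 2 := fun i =>
    (hc.fderiv (𝕜 := ℝ)).comp_left
      (g := fun L : EuclideanSpace ℝ (Fin d) →L[ℝ] ℝ => (L (EuclideanSpace.single i 1)) ^ 2)
      (by simp)
  have h3 : ∀ i : Fin d, ∫ x, (fderiv ℝ w (WithLp.toLp 2 x) (EuclideanSpace.single i 1)) ^ 2
      = ∫ y, (fderiv ℝ w y (EuclideanSpace.single i 1)) ^ 2 := fun i =>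
    hmp.integral_comp hme (fun y => (fderiv ℝ w y (EuclideanSpace.single i 1)) ^ 2)
  simp only [h3]
  rw [← integral_finsetSum _ fun i _ => (hgc i).integrable_of_hasCompactSupport (hgs i)]
  refine le_of_eq (integral_congr_ae (Filter.Eventually.of_forall fun x => ?_))
  simp only
  rw [← (InnerProductSpace.toDual ℝ (EuclideanSpace ℝ (Fin d))).symm.norm_map,
    EuclideanSpace.real_norm_sq_eq]
  refine Finset.sum_congr rfl fun i _ => ?_
  rw [← InnerProductSpace.toDual_symm_apply, EuclideanSpace.inner_single_right]
  simp

lemma holder_aux_s3 {X : Type*} [MeasurableSpace X] (μ : Measure X) (F G : X → ℝ)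
    (hF : Integrable F μ) (hG : Integrable G μ) (hF0 : ∀ x, 0 ≤ F x) (hG0 : ∀ x, 0 ≤ G x)
    (α : ℝ) (h0 : 0 < α) (h1 : α < 1) :
    Integrable (fun x => F x ^ α * G x ^ (1 - α)) μ ∧
      ∫ x, F x ^ α * G x ^ (1 - α) ∂μ ≤ (∫ x, F x ∂μ) ^ α * (∫ x, G x ∂μ) ^ (1 - α) := by
  have h1' : 0 < 1 - α := by linarith
  have hFm := hF.aestronglyMeasurable.aemeasurable
  have hGm := hG.aestronglyMeasurable.aemeasurable
  have h := ENNReal.lintegral_mul_norm_pow_le (μ := μ) hFm.ennreal_ofReal hGm.ennreal_ofReal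
    h0.le h1'.le (by ring)
  rw [← ofReal_integral_eq_lintegral_ofReal hF (Filter.Eventually.of_forall hF0),
    ← ofReal_integral_eq_lintegral_ofReal hG (Filter.Eventually.of_forall hG0),
    ENNReal.ofReal_rpow_of_nonneg (integral_nonneg hF0) h0.le,
    ENNReal.ofReal_rpow_of_nonneg (integral_nonneg hG0) h1'.le,
    ← ENNReal.ofReal_mul (Real.rpow_nonneg (integral_nonneg hF0) _)] at h
  have e : ∀ x, ENNReal.ofReal (F x) ^ α * ENNReal.ofReal (G x) ^ (1 - α)
      = ENNReal.ofReal (F x ^ α * G x ^ (1 - α)) := by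
    intro x
    rw [ENNReal.ofReal_rpow_of_nonneg (hF0 x) h0.le, ENNReal.ofReal_rpow_of_nonneg (hG0 x) h1'.le,
      ← ENNReal.ofReal_mul (Real.rpow_nonneg (hF0 x) _)]
  simp only [e] at h
  have hn : ∀ x, 0 ≤ F x ^ α * G x ^ (1 - α) := fun x =>
    mul_nonneg (Real.rpow_nonneg (hF0 x) _) (Real.rpow_nonneg (hG0 x) _)
  have hi : Integrable (fun x => F x ^ α * G x ^ (1 - α)) μ := by
    refine (lintegral_ofReal_ne_top_iff_integrable
      ((hFm.pow_const _).mul (hGm.pow_const _)).aestronglyMeasurable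
      (Filter.Eventually.of_forall hn)).1 ?_
    exact ne_top_of_le_ne_top ENNReal.ofReal_ne_top h
  refine ⟨hi, ?_⟩
  rw [← ofReal_integral_eq_lintegral_ofReal hi (Filter.Eventually.of_forall hn)] at h
  exact (ENNReal.ofReal_le_ofReal_iff (mul_nonneg (Real.rpow_nonneg (integral_nonneg hF0) _)
    (Real.rpow_nonneg (integral_nonneg hG0) _))).1 h

lemma pointwise_log (a b W α : ℝ) (hW : 0 ≤ W) (h0 : 0 < α) (h1 : α < 1) :
    W * Real.log (max 1 (max |a| |b|)) ≤ 1 / 2 * (W * Real.log W)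
      + (1 / (2 * (1 - α) * Real.exp 1)) * (W ^ α * (a ^ 2) ^ (1 - α)
        + W ^ α * (b ^ 2) ^ (1 - α) + W ^ α * 1 ^ (1 - α)) := by
  have h1' : 0 < 1 - α := by linarith
  rcases hW.eq_or_lt with hW0 | hW0
  · rw [← hW0, Real.zero_rpow h0.ne']; simp
  set M := max 1 (max |a| |b|) with hM
  have hM1 : 1 ≤ M := le_max_left _ _
  have hMp : 0 < M := by linarith
  have hMle : (M ^ 2) ^ (1 - α) ≤ (a ^ 2) ^ (1 - α) + (b ^ 2) ^ (1 - α) + 1 ^ (1 - α) := by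
    have ha : 0 ≤ (a ^ 2) ^ (1 - α) := by positivity
    have hb : 0 ≤ (b ^ 2) ^ (1 - α) := by positivity
    have hone : (1 : ℝ) ^ (1 - α) = 1 := Real.one_rpow _
    rcases max_choice 1 (max |a| |b|) with h | h
    · rw [hM, h, one_pow]; linarith
    · rcases max_choice |a| |b| with h' | h'
      · rw [hM, h, h', sq_abs]; linarith
      · rw [hM, h, h', sq_abs]; linarith
  have hy : 0 < (M ^ 2 / W) ^ (1 - α) := by positivity
  have hl := Real.log_le_sub_one_of_pos (x := (M ^ 2 / W) ^ (1 - α) / Real.exp 1) (by positivity)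
  rw [Real.log_div hy.ne' (Real.exp_pos 1).ne', Real.log_exp, Real.log_rpow (by positivity),
    Real.log_div (by positivity) hW0.ne', Real.log_pow, Real.div_rpow (by positivity) hW] at hl
  have hWa : W ^ α * W ^ (1 - α) = W := by rw [← Real.rpow_add hW0]; simp
  have hWp : 0 < W ^ (1 - α) := by positivity
  have hWap : 0 < W ^ α := by positivity
  have h2 : Real.log M ≤ 1 / 2 * Real.log W
      + (1 / (2 * (1 - α) * Real.exp 1)) * ((M ^ 2) ^ (1 - α) / W ^ (1 - α)) := by
    have h3 : (1 - α) * (2 * Real.log M - Real.log W)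
        ≤ (M ^ 2) ^ (1 - α) / W ^ (1 - α) / Real.exp 1 := by push_cast at hl; linarith
    rw [← le_div_iff₀' h1'] at h3
    have h4 : (1 / (2 * (1 - α) * Real.exp 1)) * ((M ^ 2) ^ (1 - α) / W ^ (1 - α))
      = 1 / 2 * ((M ^ 2) ^ (1 - α) / W ^ (1 - α) / Real.exp 1 / (1 - α)) := by
      field_simp
    rw [h4]; linarith
  have h5 := mul_le_mul_of_nonneg_left h2 hW
  refine h5.trans ?_
  have h6 : W * (1 / 2 * Real.log W
      + (1 / (2 * (1 - α) * Real.exp 1)) * ((M ^ 2) ^ (1 - α) / W ^ (1 - α)))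
      = 1 / 2 * (W * Real.log W)
        + (1 / (2 * (1 - α) * Real.exp 1)) * (W ^ α * (M ^ 2) ^ (1 - α)) := by
    have : W * ((M ^ 2) ^ (1 - α) / W ^ (1 - α)) = W ^ α * (M ^ 2) ^ (1 - α) := by
      nth_rewrite 1 [← hWa]
      field_simp
    rw [← this]; ring
  rw [h6, ← mul_add, ← mul_add]
  gcongr

/-- For smooth `u, v` compactly supported in a bounded measurable set `D`, `ε > 0`,
`α ∈ (0,1)`:
`∫_D |u−v|² log₊(max(|u|,|v|)) ≤ ε ‖u−v‖_V² + (d/4) log(1/ε) ‖u−v‖² + ‖u−v‖² log‖u−v‖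
  + (1/(2(1−α)e)) (‖u‖^{2(1−α)} + ‖v‖^{2(1−α)}) ‖u−v‖^{2α}
  + (1/(2(1−α)e)) (4 m(D))^{1−α} ‖u−v‖^{2α}`. -/
theorem log_plus_difference_estimate
    (d : ℕ) (hd : 1 ≤ d)
    (D : Set (EuclideanSpace ℝ (Fin d)))
    (hDmeas : MeasurableSet D) (hDbdd : Bornology.IsBounded D)
    (u v : EuclideanSpace ℝ (Fin d) → ℝ)
    (hu : ContDiff ℝ (⊤ : ℕ∞) u) (husupp : HasCompactSupport u) (husuppD : tsupport u ⊆ D)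
    (hv : ContDiff ℝ (⊤ : ℕ∞) v) (hvsupp : HasCompactSupport v) (hvsuppD : tsupport v ⊆ D)
    (ε : ℝ) (hε : 0 < ε) (α : ℝ) (hα0 : 0 < α) (hα1 : α < 1) :
    (∫ x in D, (u x - v x) ^ 2 * Real.log (max 1 (max |u x| |v x|))) ≤
      ε * (∫ x, ‖fderiv ℝ (fun y => u y - v y) x‖ ^ 2)
        + (d / 4 : ℝ) * Real.log (1 / ε) * (∫ x, (u x - v x) ^ 2)
        + (∫ x, (u x - v x) ^ 2) * Real.log (Real.sqrt (∫ x, (u x - v x) ^ 2))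
        + (1 / (2 * (1 - α) * Real.exp 1)) *
            ((∫ x, u x ^ 2) ^ (1 - α) + (∫ x, v x ^ 2) ^ (1 - α)) *
            (∫ x, (u x - v x) ^ 2) ^ α
        + (1 / (2 * (1 - α) * Real.exp 1)) * (4 * (volume D).toReal) ^ (1 - α) *
            (∫ x, (u x - v x) ^ 2) ^ α := by
  have hw : ContDiff ℝ 1 (fun y => u y - v y) := (hu.sub hv).of_le (by exact_mod_cast le_top)
  have hws : HasCompactSupport (fun y => u y - v y) := husupp.sub hvsupp
  have hls := lsi_euclid d hd _ hw hws ε hε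
  set W : EuclideanSpace ℝ (Fin d) → ℝ := fun x => (u x - v x) ^ 2 with hWdef
  have h1' : 0 < 1 - α := by linarith
  have hW0 : ∀ x, 0 ≤ W x := fun x => sq_nonneg _
  have hWc : Continuous W := hw.continuous.pow 2
  have hWs : HasCompactSupport W := hws.comp_left (g := fun y : ℝ => y ^ 2) (by simp)
  have hWi : Integrable W := hWc.integrable_of_hasCompactSupport hWs
  have hui : Integrable (fun x => u x ^ 2) := by
    have hcont : Continuous (fun x => u x ^ 2) := hu.continuous.pow 2
    have hcs : HasCompactSupport (fun x => u x ^ 2) :=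
      husupp.comp_left (g := fun y : ℝ => y ^ 2) (by simp)
    exact hcont.integrable_of_hasCompactSupport hcs
  have hvi : Integrable (fun x => v x ^ 2) := by
    have hcont : Continuous (fun x => v x ^ 2) := hv.continuous.pow 2
    have hcs : HasCompactSupport (fun x => v x ^ 2) :=
      hvsupp.comp_left (g := fun y : ℝ => y ^ 2) (by simp)
    exact hcont.integrable_of_hasCompactSupport hcs
  have hDfin : volume D ≠ ⊤ := hDbdd.measure_lt_top.ne
  have h1i : Integrable (fun _ : EuclideanSpace ℝ (Fin d) => (1 : ℝ)) (volume.restrict D) := by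
    have : IsFiniteMeasure (volume.restrict D) := isFiniteMeasure_restrict.2 hDfin
    exact integrable_const 1
  obtain ⟨i1, b1⟩ := holder_aux_s3 (volume.restrict D) W (fun x => u x ^ 2) hWi.restrict hui.restrict
    hW0 (fun x => sq_nonneg _) α hα0 hα1
  obtain ⟨i2, b2⟩ := holder_aux_s3 (volume.restrict D) W (fun x => v x ^ 2) hWi.restrict hvi.restrict
    hW0 (fun x => sq_nonneg _) α hα0 hα1
  obtain ⟨i3, b3⟩ := holder_aux_s3 (volume.restrict D) W (fun _ => (1 : ℝ)) hWi.restrict h1i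
    hW0 (fun x => zero_le_one) α hα0 hα1
  have hWl : Integrable fun x => W x * Real.log (W x) :=
    (Real.continuous_mul_log.comp hWc).integrable_of_hasCompactSupport
      (hWs.comp_left (g := fun y : ℝ => y * Real.log y) (by simp))
  have hLi : Integrable fun x => W x * Real.log (max 1 (max |u x| |v x|)) := by
    refine Continuous.integrable_of_hasCompactSupport ?_ (hWs.mul_right)
    refine hWc.mul (Continuous.log ?_ fun x => ?_)
    · exact continuous_const.max (hu.continuous.abs.max hv.continuous.abs)
    · have : (1 : ℝ) ≤ max 1 (max |u x| |v x|) := le_max_left _ _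
      positivity
  set c := 1 / (2 * (1 - α) * Real.exp 1) with hcdef
  have hc0 : 0 ≤ c := by positivity
  have i12 := i1.add i2
  have i123 := (i12.add i3).const_mul c
  have hmono := integral_mono hLi.restrict ((hWl.restrict.const_mul (1 / 2)).add i123)
    (μ := volume.restrict D)
    (fun x => pointwise_log (u x) (v x) (W x) α (hW0 x) hα0 hα1)
  have hsplit : ∫ x in D, ((fun x => 1 / 2 * (W x * Real.log (W x))) + fun x =>
      c * (((fun x => W x ^ α * (u x ^ 2) ^ (1 - α)) + fun x => W x ^ α * (v x ^ 2) ^ (1 - α))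
        + fun x => W x ^ α * (1 : ℝ) ^ (1 - α)) x) x
      = 1 / 2 * (∫ x in D, W x * Real.log (W x)) + c * ((∫ x in D, W x ^ α * (u x ^ 2) ^ (1 - α))
        + (∫ x in D, W x ^ α * (v x ^ 2) ^ (1 - α)) + ∫ x in D, W x ^ α * (1 : ℝ) ^ (1 - α)) := by
    rw [integral_add' (hWl.restrict.const_mul (1 / 2)) i123, integral_const_mul,
      integral_const_mul, integral_add' i12 i3, integral_add' i1 i2]
  have hmono' := hmono.trans_eq hsplit
  have hD : ∫ x in D, W x * Real.log (W x) = ∫ x, W x * Real.log (W x) := by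
    refine setIntegral_eq_integral_of_forall_compl_eq_zero fun x hx => ?_
    have e1 : u x = 0 := image_eq_zero_of_notMem_tsupport fun h => hx (husuppD h)
    have e2 : v x = 0 := image_eq_zero_of_notMem_tsupport fun h => hx (hvsuppD h)
    simp [hWdef, e1, e2]
  rw [hD] at hmono'
  have mono : ∀ F : EuclideanSpace ℝ (Fin d) → ℝ, Integrable F → (∀ x, 0 ≤ F x) →
      0 ≤ ∫ x in D, F x ∧ ∫ x in D, F x ≤ ∫ x, F x := fun F hF h0 =>
    ⟨integral_nonneg h0, setIntegral_le_integral hF (Filter.Eventually.of_forall h0)⟩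
  have mW := mono W hWi hW0
  have mu := mono _ hui (fun x => sq_nonneg _)
  have mv := mono _ hvi (fun x => sq_nonneg _)
  have hN0 : 0 ≤ ∫ x, W x := integral_nonneg hW0
  have rW : (∫ x in D, W x) ^ α ≤ (∫ x, W x) ^ α := Real.rpow_le_rpow mW.1 mW.2 hα0.le
  have c1 : ∫ x in D, W x ^ α * (u x ^ 2) ^ (1 - α)
      ≤ (∫ x, W x) ^ α * (∫ x, u x ^ 2) ^ (1 - α) := b1.trans
    (mul_le_mul rW (Real.rpow_le_rpow mu.1 mu.2 h1'.le) (Real.rpow_nonneg mu.1 _)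
      (Real.rpow_nonneg hN0 _))
  have c2 : ∫ x in D, W x ^ α * (v x ^ 2) ^ (1 - α)
      ≤ (∫ x, W x) ^ α * (∫ x, v x ^ 2) ^ (1 - α) := b2.trans
    (mul_le_mul rW (Real.rpow_le_rpow mv.1 mv.2 h1'.le) (Real.rpow_nonneg mv.1 _)
      (Real.rpow_nonneg hN0 _))
  have hone : ∫ _ in D, (1 : ℝ) = (volume D).toReal := by simp [Measure.real]
  have c3 : ∫ x in D, W x ^ α * (1 : ℝ) ^ (1 - α)
      ≤ (∫ x, W x) ^ α * (4 * (volume D).toReal) ^ (1 - α) := by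
    refine b3.trans (mul_le_mul rW ?_ (Real.rpow_nonneg (integral_nonneg fun _ => zero_le_one) _)
      (Real.rpow_nonneg hN0 _))
    rw [hone]
    have : 0 ≤ (volume D).toReal := ENNReal.toReal_nonneg
    exact Real.rpow_le_rpow this (by linarith) h1'.le
  have c123 := mul_le_mul_of_nonneg_left (add_le_add (add_le_add c1 c2) c3) hc0
  have hgr : 0 ≤ ε * ∫ x, ‖fderiv ℝ (fun y => u y - v y) x‖ ^ 2 :=
    mul_nonneg hε.le (integral_nonneg fun x => sq_nonneg _)
  rw [Real.log_sqrt hN0]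
  refine hmono'.trans ?_
  have e1 : c * ((∫ x, u x ^ 2) ^ (1 - α) + (∫ x, v x ^ 2) ^ (1 - α)) * (∫ x, W x) ^ α
      + c * (4 * (volume D).toReal) ^ (1 - α) * (∫ x, W x) ^ α
      = c * ((∫ x, W x) ^ α * (∫ x, u x ^ 2) ^ (1 - α)
        + (∫ x, W x) ^ α * (∫ x, v x ^ 2) ^ (1 - α)
        + (∫ x, W x) ^ α * (4 * (volume D).toReal) ^ (1 - α)) := by ring
  have e2 : (∫ x, W x) * (Real.log (∫ x, W x) / 2) = 1 / 2 * ((∫ x, W x) * Real.log (∫ x, W x)) := by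
    ring
  have e3 : (d / 4 : ℝ) * Real.log (1 / ε) * (∫ x, W x)
    = 1 / 2 * (d / 2 * Real.log (1 / ε) * (∫ x, W x)) := by ring
  rw [e2, e3, add_assoc _ (c * _ * _) (c * _ * _), e1]
  linarith
end

section
/- Let d ≥ 1, let D ⊆ ℝ^d be a bounded measurable set of Lebesgue measure m(D), and let σ : ℝ → ℝ satisfy |σ(x)| ≤ L₃ + L₄|x|·(log₊|x|)^{1/2} for all x ∈ ℝ, where L₃, L₄ > 0. Then for every smooth u : ℝ^d → ℝ with compact support contained in D and every θ > 0: ∫_D σ(u(x))² dx ≤ 2 L₃² m(D) + 2 L₄² · [ θ ∫ |∇u(x)|² dx + (d/4)·log(1/θ) · ‖u‖² + ‖u‖² · log‖u‖ + m(D)/(2e) ], where ‖u‖ denotes the L² norm of u and ‖u‖² log‖u‖ is interpreted as 0 when u ≡ 0. -/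
open MeasureTheory

lemma lw_aux {d : ℕ} (hd : 2 ≤ d) (h : Fin d → (Fin d → ℝ) → ENNReal)
    (hm : ∀ i, Measurable (h i)) (s : Finset (Fin d)) (x : Fin d → ℝ) :
    lmarginal (fun _ => (volume : Measure ℝ)) s
      (fun x => ∏ i, (lmarginal (fun _ => (volume : Measure ℝ)) {i} (h i) x) ^ (1 / ((d : ℝ) - 1))) x
    ≤ ∏ i, (lmarginal (fun _ => (volume : Measure ℝ)) (insert i s) (h i) x)
        ^ (1 / ((d : ℝ) - 1)) := by
  have hd' : (2 : ℝ) ≤ d := by exact_mod_cast hd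
  have hq : 0 ≤ 1 / ((d : ℝ) - 1) := by
    apply div_nonneg <;> linarith
  induction s using Finset.induction generalizing x with
  | empty => simp
  | insert j s hj ih =>
    rw [lmarginal_insert _ (Finset.measurable_prod _ fun i _ => ((hm i).lmarginal _).pow_const _) hj]
    calc _ ≤ ∫⁻ t, ∏ i, (lmarginal (fun _ => (volume : Measure ℝ)) (insert i s) (h i)
              (Function.update x j t)) ^ (1 / ((d : ℝ) - 1)) := lintegral_mono fun t => ih _
      _ = ∫⁻ t, (lmarginal (fun _ => (volume : Measure ℝ)) (insert j s) (h j) x)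
              ^ (1 / ((d : ℝ) - 1)) * ∏ i ∈ Finset.univ.erase j,
            (lmarginal (fun _ => (volume : Measure ℝ)) (insert i s) (h i)
              (Function.update x j t)) ^ (1 / ((d : ℝ) - 1)) := by
          congr 1; ext t
          rw [← Finset.mul_prod_erase _ _ (Finset.mem_univ j),
            lmarginal_update_of_mem _ (Finset.mem_insert_self j s)]
      _ = (lmarginal (fun _ => (volume : Measure ℝ)) (insert j s) (h j) x)
              ^ (1 / ((d : ℝ) - 1)) * ∫⁻ t, ∏ i ∈ Finset.univ.erase j,
            (lmarginal (fun _ => (volume : Measure ℝ)) (insert i s) (h i)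
              (Function.update x j t)) ^ (1 / ((d : ℝ) - 1)) := by
          apply lintegral_const_mul
          exact Finset.measurable_prod _ fun i _ =>
            (((hm i).lmarginal _).comp (measurable_update x)).pow_const _
      _ ≤ (lmarginal (fun _ => (volume : Measure ℝ)) (insert j s) (h j) x)
              ^ (1 / ((d : ℝ) - 1)) * ∏ i ∈ Finset.univ.erase j, (∫⁻ t,
            (lmarginal (fun _ => (volume : Measure ℝ)) (insert i s) (h i)
              (Function.update x j t))) ^ (1 / ((d : ℝ) - 1)) := by
          gcongr
          apply ENNReal.lintegral_prod_norm_pow_le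
          · intro i _
            exact (((hm i).lmarginal _).comp (measurable_update x)).aemeasurable
          · simp only [Finset.sum_const, Finset.card_erase_of_mem (Finset.mem_univ j),
              Finset.card_univ, Fintype.card_fin, nsmul_eq_mul]
            rw [Nat.cast_sub (by omega)]
            have : (d : ℝ) - 1 ≠ 0 := by linarith
            field_simp
            simp
          · intro i _; exact hq
      _ = _ := by
          rw [← Finset.mul_prod_erase _ _ (Finset.mem_univ j)]
          congr 1
          · simp
          · refine Finset.prod_congr rfl fun i hi => ?_
            have hij : i ≠ j := Finset.ne_of_mem_erase hi
            have hji : j ∉ insert i s := by simp [hj, hij.symm]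
            have := lmarginal_insert (μ := fun _ : Fin d => (volume : Measure ℝ)) (h i) (hm i) hji x
            rw [← this, Finset.insert_comm]

lemma slice_bound {d : ℕ} (f : (Fin d → ℝ) → ℝ) (hf : ContDiff ℝ 1 f)
    (hs : HasCompactSupport f) (i : Fin d) (x : Fin d → ℝ) :
    ‖f x‖ₑ ≤ lmarginal (fun _ => (volume : Measure ℝ)) {i}
      (fun x => ‖fderiv ℝ f x (Pi.single i 1)‖ₑ) x := by
  rw [lmarginal_singleton]
  calc ‖f x‖ₑ
    _ ≤ ∫⁻ t in Set.Iic (x i), ‖deriv (f ∘ Function.update x i) t‖ₑ := by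
        apply le_trans (by simp) (HasCompactSupport.enorm_le_lintegral_Ici_deriv _ _ _)
        · exact hf.comp (by convert! contDiff_update 1 x i)
        · exact hs.comp_isClosedEmbedding (isClosedEmbedding_update x i)
    _ ≤ ∫⁻ t, ‖fderiv ℝ f (Function.update x i t) (Pi.single i 1)‖ₑ := by
        gcongr with y
        · exact Measure.restrict_le_self
        · rw [fderiv_comp_deriv _ (hf.differentiable one_ne_zero).differentiableAt
            (hasDerivAt_update x i y).differentiableAt, deriv_update]

lemma entropy_core {d : ℕ} (hd : 1 ≤ d) (f : (Fin d → ℝ) → ℝ) (hf : ContDiff ℝ 1 f)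
    (hs : HasCompactSupport f) (h0 : ∀ x, 0 ≤ f x) (hA : 0 < ∫ x, f x)
    (C : Fin d → ℝ) (hC : ∀ i, 0 < C i)
    (hCi : ∀ i, ∫⁻ x, ‖fderiv ℝ f x (Pi.single i 1)‖ₑ ≤ ENNReal.ofReal (C i)) :
    ∫ x, f x * Real.log (f x) ≤
      (∫ x, f x) * ∑ i, Real.log (C i) - ((d : ℝ) - 1) * ((∫ x, f x) * Real.log (∫ x, f x)) := by
  have hfi : Integrable f := hf.continuous.integrable_of_hasCompactSupport hs
  have hfl : Integrable (fun x => f x * Real.log (f x)) := by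
    apply Continuous.integrable_of_hasCompactSupport
    · exact Real.continuous_mul_log.comp hf.continuous
    · exact hs.mul_right
  have hmeas : ∀ i, Measurable (fun x => ‖fderiv ℝ f x (Pi.single i 1)‖ₑ) := by
    intro i
    have : Continuous (fun x => fderiv ℝ f x (Pi.single i 1)) :=
      (hf.continuous_fderiv one_ne_zero).clm_apply continuous_const
    exact this.measurable.enorm
  have hen : ∀ x, ‖f x‖ₑ = ENNReal.ofReal (f x) := fun x => Real.enorm_of_nonneg (h0 x)
  rcases hd.eq_or_lt with h1 | h2
  · subst h1
    have hb : ∀ x, f x ≤ C 0 := by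
      intro x
      have h := slice_bound f hf hs 0 x
      have hu : ({0} : Finset (Fin 1)) = Finset.univ := rfl
      rw [hu, lmarginal_univ] at h
      have h' := h.trans (hCi 0)
      rw [hen] at h'
      exact (ENNReal.ofReal_le_ofReal_iff (hC 0).le).1 h'
    have : ∫ x, f x * Real.log (f x) ≤ ∫ x, f x * Real.log (C 0) := by
      apply integral_mono hfl (hfi.mul_const _)
      intro x
      rcases (h0 x).eq_or_lt with h | h
      · simp [← h]
      · exact mul_le_mul_of_nonneg_left (Real.log_le_log h (hb x)) h.le
    rw [integral_mul_const] at this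
    simpa using this
  · have hd' : (2 : ℝ) ≤ d := by exact_mod_cast h2
    have hd1 : (0 : ℝ) < (d : ℝ) - 1 := by linarith
    set q : ℝ := 1 / ((d : ℝ) - 1) with hq
    have hq0 : 0 < q := by positivity
    set A := ∫ x, f x with hAdef
    set K : ℝ := ∏ i, C i ^ q with hK
    have hK0 : 0 < K := Finset.prod_pos fun i _ => Real.rpow_pos_of_pos (hC i) q
    have hlw : ∫⁻ x, ENNReal.ofReal (f x * f x ^ q) ≤ ENNReal.ofReal K := by
      have h1 : ∀ x, ENNReal.ofReal (f x * f x ^ q) ≤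
          ∏ i, (lmarginal (fun _ => (volume : Measure ℝ)) {i}
            (fun x => ‖fderiv ℝ f x (Pi.single i 1)‖ₑ) x) ^ (1 / ((d : ℝ) - 1)) := by
        intro x
        calc ENNReal.ofReal (f x * f x ^ q) = ∏ i : Fin d, ‖f x‖ₑ ^ q := by
              rw [Finset.prod_const, Finset.card_univ, Fintype.card_fin, hen,
                ENNReal.ofReal_rpow_of_nonneg (h0 x) hq0.le,
                ← ENNReal.ofReal_pow (Real.rpow_nonneg (h0 x) _), ← Real.rpow_natCast,
                ← Real.rpow_mul (h0 x)]
              congr 1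
              have : q * d = 1 + q := by rw [hq]; field_simp; ring
              rw [this, Real.rpow_add' (h0 x) (by positivity), Real.rpow_one]
          _ ≤ _ := by
              apply Finset.prod_le_prod' 
              intro i _
              exact ENNReal.rpow_le_rpow (slice_bound f hf hs i x) hq0.le
      have h3 := lw_aux h2 _ hmeas Finset.univ 0
      simp only [lmarginal_univ, Finset.insert_eq_of_mem (Finset.mem_univ _)] at h3
      calc _ ≤ _ := lintegral_mono h1
        _ ≤ _ := h3
        _ ≤ ∏ i, (ENNReal.ofReal (C i)) ^ q := by
          apply Finset.prod_le_prod'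
          intro i _
          exact ENNReal.rpow_le_rpow (hCi i) hq0.le
        _ = _ := by
          rw [hK, ENNReal.ofReal_prod_of_nonneg fun i _ => Real.rpow_nonneg (hC i).le q]
          exact Finset.prod_congr rfl fun i _ => ENNReal.ofReal_rpow_of_nonneg (hC i).le hq0.le
    have hi : Integrable (fun x => f x * f x ^ q) := by
      apply Continuous.integrable_of_hasCompactSupport
      · exact hf.continuous.mul (hf.continuous.rpow_const fun x => Or.inr hq0.le)
      · exact hs.mul_right
    have hlw' : ∫ x, f x * f x ^ q ≤ K := by
      rw [integral_eq_lintegral_of_nonneg_ae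
        (Filter.Eventually.of_forall fun x => mul_nonneg (h0 x) (Real.rpow_nonneg (h0 x) q))
        hi.aestronglyMeasurable]
      exact ENNReal.toReal_le_of_le_ofReal hK0.le hlw
    have hpt : ∀ x, q * (f x * Real.log (f x)) ≤
        (A / K) * (f x * f x ^ q) + (Real.log (K / A) - 1) * f x := by
      intro x
      rcases (h0 x).eq_or_lt with h | h
      · simp [← h]
      · have hz : 0 < f x ^ q := Real.rpow_pos_of_pos h q
        have hlog := Real.log_le_sub_one_of_pos (show 0 < f x ^ q * (A / K) by positivity)
        rw [Real.log_mul hz.ne' (by positivity), Real.log_rpow h, Real.log_div hA.ne' hK0.ne'] at hlog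
        rw [Real.log_div hK0.ne' hA.ne']
        nlinarith [mul_le_mul_of_nonneg_left hlog h.le]
    have hint := integral_mono (hfl.const_mul q)
      ((hi.const_mul (A / K)).add (hfi.const_mul (Real.log (K / A) - 1))) hpt
    have e2 : ∫ x, ((fun x => (A / K) * (f x * f x ^ q)) + fun x => (Real.log (K / A) - 1) * f x) x
        = (A / K) * (∫ x, f x * f x ^ q) + (Real.log (K / A) - 1) * A := by
      simp only [Pi.add_apply]
      rw [integral_add (hi.const_mul (A / K)) (hfi.const_mul (Real.log (K / A) - 1)),
        integral_const_mul, integral_const_mul]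
    rw [e2, integral_const_mul] at hint
    have e3 : (A / K) * (∫ x, f x * f x ^ q) ≤ A := by
      calc _ ≤ (A / K) * K := mul_le_mul_of_nonneg_left hlw' (by positivity)
        _ = A := by field_simp
    have e4 : Real.log (K / A) = q * ∑ i, Real.log (C i) - Real.log A := by
      rw [Real.log_div hK0.ne' hA.ne', hK, Real.log_prod (fun i _ => (Real.rpow_pos_of_pos (hC i) q).ne'),
        Finset.mul_sum]
      simp only [Real.log_rpow (hC _)]
    rw [e4] at hint
    have e5 : q * (∫ x, f x * Real.log (f x)) ≤ (q * ∑ i, Real.log (C i) - Real.log A) * A := by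
      linarith
    have e6 := mul_le_mul_of_nonneg_left e5 hd1.le
    have e7 : ((d : ℝ) - 1) * q = 1 := by rw [hq]; field_simp
    calc ∫ x, f x * Real.log (f x) = ((d : ℝ) - 1) * (q * ∫ x, f x * Real.log (f x)) := by
          rw [← mul_assoc, e7, one_mul]
      _ ≤ _ := e6
      _ = (((d : ℝ) - 1) * q) * (A * ∑ i, Real.log (C i)) - ((d : ℝ) - 1) * (A * Real.log A) := by ring
      _ = _ := by rw [e7, one_mul]

lemma sum_sq_le {d : ℕ} (L : EuclideanSpace ℝ (Fin d) →L[ℝ] ℝ) :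
    ∑ i, (L (EuclideanSpace.single i 1)) ^ 2 ≤ ‖L‖ ^ 2 := by
  have h := (EuclideanSpace.basisFun (Fin d) ℝ).sum_sq_norm_inner_left
    ((InnerProductSpace.toDual ℝ _).symm L)
  simp only [InnerProductSpace.toDual_symm_apply, LinearIsometryEquiv.norm_map,
    EuclideanSpace.basisFun_apply, Real.norm_eq_abs, sq_abs] at h
  exact h.le

lemma log_sobolev {d : ℕ} (hd : 1 ≤ d) (u : EuclideanSpace ℝ (Fin d) → ℝ)
    (hu : ContDiff ℝ 1 u) (hs : HasCompactSupport u) (θ : ℝ) (hθ : 0 < θ) :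
    ∫ x, u x ^ 2 * Real.log (u x ^ 2) ≤
      2 * (θ * (∫ x, ‖fderiv ℝ u x‖ ^ 2)
            + (d / 4 : ℝ) * Real.log (1 / θ) * (∫ x, u x ^ 2)
            + (∫ x, u x ^ 2) * Real.log (Real.sqrt (∫ x, u x ^ 2))) := by
  have hmp := PiLp.volume_preserving_toLp (Fin d)
  have hme := (MeasurableEquiv.toLp 2 (Fin d → ℝ)).measurableEmbedding
  have tr : ∀ g : EuclideanSpace ℝ (Fin d) → ℝ, ∫ x, g (WithLp.toLp 2 x) = ∫ x, g x :=
    fun g => hmp.integral_comp hme g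
  have hsq : Integrable (fun x => u x ^ 2) := by
    apply Continuous.integrable_of_hasCompactSupport
    · exact hu.continuous.pow 2
    · exact hs.comp_left (g := fun y : ℝ => y ^ 2) (by simp)
  have hfc := hu.continuous_fderiv one_ne_zero
  have hgc : ∀ i, Continuous (fun x => fderiv ℝ u x (EuclideanSpace.single i 1)) :=
    fun i => hfc.clm_apply continuous_const
  have hgi : ∀ i, Integrable (fun x => (fderiv ℝ u x (EuclideanSpace.single i 1)) ^ 2) := by
    intro i
    apply Continuous.integrable_of_hasCompactSupport
    · exact (hgc i).pow 2
    · exact (hs.fderiv ℝ).comp_left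
        (g := fun L : EuclideanSpace ℝ (Fin d) →L[ℝ] ℝ => (L (EuclideanSpace.single i 1)) ^ 2) (by simp)
  have hni : Integrable (fun x => ‖fderiv ℝ u x‖ ^ 2) := by
    apply Continuous.integrable_of_hasCompactSupport
    · exact hfc.norm.pow 2
    · exact (hs.fderiv ℝ).comp_left
        (g := fun L : EuclideanSpace ℝ (Fin d) →L[ℝ] ℝ => ‖L‖ ^ 2) (by simp)
  set A := ∫ x, u x ^ 2 with hAdef
  set B : Fin d → ℝ := fun i => ∫ x, (fderiv ℝ u x (EuclideanSpace.single i 1)) ^ 2 with hB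
  have hB0 : ∀ i, 0 ≤ B i := fun i => integral_nonneg fun x => sq_nonneg _
  have hBs : ∑ i, B i ≤ ∫ x, ‖fderiv ℝ u x‖ ^ 2 := by
    rw [hB, ← integral_finsetSum _ fun i _ => hgi i]
    exact integral_mono (integrable_finsetSum _ fun i _ => hgi i) hni fun x => sum_sq_le _
  have hA0 : 0 ≤ A := integral_nonneg fun x => sq_nonneg _
  have hN0 : 0 ≤ ∫ x, ‖fderiv ℝ u x‖ ^ 2 := integral_nonneg fun x => sq_nonneg _
  rcases hA0.eq_or_lt with hA | hA
  · have h1 : (fun x => u x ^ 2) =ᵐ[volume] 0 :=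
      (integral_eq_zero_iff_of_nonneg (fun x => sq_nonneg _) hsq).1 hA.symm
    have h2 : ∫ x, u x ^ 2 * Real.log (u x ^ 2) = 0 := by
      apply integral_eq_zero_of_ae
      filter_upwards [h1] with x hx
      have hx' : u x ^ 2 = 0 := hx
      simp [hx']
    rw [h2, ← hA]
    simp only [mul_zero, zero_mul, add_zero]
    positivity
  · let f : (Fin d → ℝ) → ℝ := fun x => u (WithLp.toLp 2 x) ^ 2
    let e : (Fin d → ℝ) →L[ℝ] EuclideanSpace ℝ (Fin d) :=
      ((PiLp.continuousLinearEquiv 2 ℝ (fun _ : Fin d => ℝ)).symm :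
        (Fin d → ℝ) →L[ℝ] EuclideanSpace ℝ (Fin d))
    have he : ∀ x, e x = WithLp.toLp 2 x := fun x => rfl
    have hw : ContDiff ℝ 1 (fun x => u (WithLp.toLp 2 x)) := hu.comp e.contDiff
    have hf : ContDiff ℝ 1 f := hw.pow 2
    have hfs : HasCompactSupport f := by
      have : HasCompactSupport (fun x => u (WithLp.toLp 2 x)) :=
        hs.comp_homeomorph (PiLp.continuousLinearEquiv 2 ℝ (fun _ : Fin d => ℝ)).symm.toHomeomorph
      exact this.comp_left (g := fun y : ℝ => y ^ 2) (by simp)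
    have hfd : ∀ x i, fderiv ℝ f x (Pi.single i 1) =
        2 * u (WithLp.toLp 2 x) * fderiv ℝ u (WithLp.toLp 2 x) (EuclideanSpace.single i 1) := by
      intro x i
      have h1 : HasFDerivAt (fun x => u (WithLp.toLp 2 x))
          ((fderiv ℝ u (WithLp.toLp 2 x)).comp e) x :=
        HasFDerivAt.comp (g := u) x ((hu.differentiable one_ne_zero) _).hasFDerivAt e.hasFDerivAt
      have h2 := (h1.pow 2).fderiv
      have h3 : fderiv ℝ f x = _ := h2
      rw [h3]
      have h4 : e (Pi.single i 1) = EuclideanSpace.single i 1 := rfl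
      simp [h4]
    have hfA : ∫ x, f x = A := tr (fun x => u x ^ 2)
    have hsθ : 0 < √θ := Real.sqrt_pos.2 hθ
    have hss : √θ * √θ = θ := Real.mul_self_sqrt hθ.le
    have key := entropy_core hd f hf hfs (fun x => sq_nonneg _) (by rw [hfA]; exact hA)
      (fun i => (√θ)⁻¹ * (A + θ * B i))
      (fun i => by have := hB0 i; positivity) (by
        intro i
        let G : EuclideanSpace ℝ (Fin d) → ℝ := fun x => (√θ)⁻¹ *
          (u x ^ 2 + θ * (fderiv ℝ u x (EuclideanSpace.single i 1)) ^ 2)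
        have hG0 : ∀ x, 0 ≤ G x := fun x => by positivity
        have hGi : Integrable G := (hsq.add ((hgi i).const_mul θ)).const_mul _
        have hGv : ∫ x, G x = (√θ)⁻¹ * (A + θ * B i) := by
          simp only [G]
          rw [integral_const_mul, integral_add hsq ((hgi i).const_mul θ), integral_const_mul]
        rw [← hGv, ofReal_integral_eq_lintegral_ofReal hGi (Filter.Eventually.of_forall hG0),
          ← hmp.lintegral_comp_emb hme]
        apply lintegral_mono
        intro x
        simp only [hfd]
        rw [Real.enorm_eq_ofReal_abs]
        apply ENNReal.ofReal_le_ofReal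
        simp only [G]
        generalize u (WithLp.toLp 2 x) = a
        generalize fderiv ℝ u (WithLp.toLp 2 x) (EuclideanSpace.single i 1) = b
        have hab : |2 * a * b| * √θ = |2 * a * b * √θ| := by rw [abs_mul _ (√θ), abs_of_pos hsθ]
        rw [inv_mul_eq_div, le_div_iff₀ hsθ, hab]
        have hq2 : θ * b ^ 2 = (√θ * b) ^ 2 := by rw [mul_pow, Real.sq_sqrt hθ.le]
        rw [hq2]
        apply abs_le.2
        constructor <;> nlinarith [sq_nonneg (a - √θ * b), sq_nonneg (a + √θ * b)])
    have hL : ∫ x, f x * Real.log (f x) = ∫ x, u x ^ 2 * Real.log (u x ^ 2) :=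
      tr (fun x => u x ^ 2 * Real.log (u x ^ 2))
    rw [hL, hfA] at key
    have hlogi : ∀ i, A * Real.log ((√θ)⁻¹ * (A + θ * B i)) ≤
        A * Real.log A - A * (Real.log θ / 2) + θ * B i := by
      intro i
      have hp : 0 < 1 + θ * B i / A := by have := hB0 i; positivity
      have : (√θ)⁻¹ * (A + θ * B i) = (√θ)⁻¹ * (A * (1 + θ * B i / A)) := by
        field_simp
      rw [this, Real.log_mul (by positivity) (by positivity), Real.log_mul hA.ne' hp.ne',
        Real.log_inv, Real.log_sqrt hθ.le]
      have h5 := mul_le_mul_of_nonneg_left (Real.log_le_sub_one_of_pos hp) hA.le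
      have h6 : A * (1 + θ * B i / A - 1) = θ * B i := by field_simp; ring
      rw [h6] at h5
      linarith
    have hsum := Finset.sum_le_sum fun i (_ : i ∈ Finset.univ) => hlogi i
    rw [← Finset.mul_sum, Finset.sum_add_distrib, ← Finset.mul_sum] at hsum
    simp only [Finset.sum_const, Finset.card_univ, Fintype.card_fin, nsmul_eq_mul] at hsum
    rw [Real.log_sqrt hA.le, one_div, Real.log_inv]
    have := mul_le_mul_of_nonneg_left hBs hθ.le
    have := mul_nonneg hθ.le hN0
    linarith

lemma logplus_bound (a : ℝ) :
    a ^ 2 * Real.log (max 1 |a|) ≤ (1 / 2) * (a ^ 2 * Real.log (a ^ 2)) + 1 / (2 * Real.exp 1) := by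
  have he : 0 < Real.exp 1 := Real.exp_pos 1
  have hl : Real.log (a ^ 2) = 2 * Real.log |a| := by
    rw [← sq_abs, Real.log_pow]; norm_num
  rcases le_total 1 |a| with h | h
  · rw [max_eq_right h, hl]
    have : 0 < 1 / (2 * Real.exp 1) := by positivity
    linarith
  · rw [max_eq_left h, Real.log_one, mul_zero]
    rcases (sq_nonneg a).eq_or_lt with h0 | h0
    · rw [← h0]; simp; positivity
    · have h1 := Real.log_le_sub_one_of_pos (show 0 < (a ^ 2)⁻¹ * (Real.exp 1)⁻¹ by positivity)
      rw [Real.log_mul (by positivity) (by positivity), Real.log_inv, Real.log_inv, Real.log_exp] at h1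
      have h2 := mul_le_mul_of_nonneg_left h1 h0.le
      have h3 : a ^ 2 * ((a ^ 2)⁻¹ * (Real.exp 1)⁻¹ - 1) = (Real.exp 1)⁻¹ - a ^ 2 := by
        rw [mul_sub, ← mul_assoc, mul_inv_cancel₀ h0.ne', one_mul, mul_one]
      rw [h3] at h2
      have h4 : 1 / (2 * Real.exp 1) = (1 / 2) * (Real.exp 1)⁻¹ := by field_simp
      rw [h4]
      linarith


/-- If `|σ(x)| ≤ L₃ + L₄ |x| (log₊|x|)^{1/2}`, then for smooth `u` compactly supported in a
bounded measurable set `D` and `θ > 0`: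
`∫_D σ(u)² ≤ 2L₃² m(D) + 2L₄² [θ ‖∇u‖² + (d/4) log(1/θ) ‖u‖² + ‖u‖² log‖u‖ + m(D)/(2e)]`. -/
theorem sigma_square_bound
    (d : ℕ) (hd : 1 ≤ d)
    (D : Set (EuclideanSpace ℝ (Fin d)))
    (hDmeas : MeasurableSet D) (hDbdd : Bornology.IsBounded D)
    (σ : ℝ → ℝ) (L₃ L₄ : ℝ) (hL₃ : 0 < L₃) (hL₄ : 0 < L₄)
    (hσ : ∀ x : ℝ, |σ x| ≤ L₃ + L₄ * |x| * Real.sqrt (Real.log (max 1 |x|)))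
    (u : EuclideanSpace ℝ (Fin d) → ℝ)
    (hu : ContDiff ℝ (⊤ : ℕ∞) u) (hsupp : HasCompactSupport u) (hsuppD : tsupport u ⊆ D)
    (θ : ℝ) (hθ : 0 < θ) :
    (∫ x in D, σ (u x) ^ 2) ≤
      2 * L₃ ^ 2 * (volume D).toReal
        + 2 * L₄ ^ 2 *
          (θ * (∫ x, ‖fderiv ℝ u x‖ ^ 2)
            + (d / 4 : ℝ) * Real.log (1 / θ) * (∫ x, u x ^ 2)
            + (∫ x, u x ^ 2) * Real.log (Real.sqrt (∫ x, u x ^ 2))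
            + (volume D).toReal / (2 * Real.exp 1)) := by

  have hu1 : ContDiff ℝ 1 u := hu.of_le (by exact_mod_cast le_top)
  have hls := log_sobolev hd u hu1 hsupp θ hθ
  have hDfin : volume D ≠ ⊤ := hDbdd.measure_lt_top.ne
  have hc : ∀ c : ℝ, Integrable (fun _ : EuclideanSpace ℝ (Fin d) => c) (volume.restrict D) :=
    fun c => integrableOn_const hDfin
  have hphi : Integrable (fun x => u x ^ 2 * Real.log (u x ^ 2)) := by
    apply Continuous.integrable_of_hasCompactSupport
    · exact Real.continuous_mul_log.comp (hu.continuous.pow 2)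
    · exact hsupp.comp_left (g := fun y : ℝ => y ^ 2 * Real.log (y ^ 2)) (by simp)
  have hDphi : ∫ x in D, u x ^ 2 * Real.log (u x ^ 2) = ∫ x, u x ^ 2 * Real.log (u x ^ 2) := by
    apply setIntegral_eq_integral_of_forall_compl_eq_zero
    intro x hx
    have : u x = 0 := image_eq_zero_of_notMem_tsupport fun h => hx (hsuppD h)
    simp [this]
  have hpt : ∀ x, σ (u x) ^ 2 ≤ 2 * L₃ ^ 2 + L₄ ^ 2 / Real.exp 1
      + L₄ ^ 2 * (u x ^ 2 * Real.log (u x ^ 2)) := by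
    intro x
    have h1 := hσ (u x)
    have h2 := logplus_bound (u x)
    generalize u x = a at *
    have hl : 0 ≤ Real.log (max 1 |a|) := Real.log_nonneg (le_max_left _ _)
    have h3 : σ a ^ 2 ≤ (L₃ + L₄ * |a| * √(Real.log (max 1 |a|))) ^ 2 :=
      sq_le_sq' (by linarith [neg_abs_le (σ a)]) ((le_abs_self _).trans h1)
    have h4 : (L₄ * |a| * √(Real.log (max 1 |a|))) ^ 2 = L₄ ^ 2 * (a ^ 2 * Real.log (max 1 |a|)) := by
      rw [mul_pow, mul_pow, sq_abs, Real.sq_sqrt hl]; ring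
    have h5 := mul_le_mul_of_nonneg_left h2 (sq_nonneg L₄)
    have h6 : L₄ ^ 2 / Real.exp 1 = 2 * (L₄ ^ 2 * (1 / (2 * Real.exp 1))) := by field_simp
    rw [h6]
    nlinarith [sq_nonneg (L₃ - L₄ * |a| * √(Real.log (max 1 |a|)))]
  have hmono : ∫ x in D, σ (u x) ^ 2 ≤ ∫ x in D, (2 * L₃ ^ 2 + L₄ ^ 2 / Real.exp 1
      + L₄ ^ 2 * (u x ^ 2 * Real.log (u x ^ 2))) :=
    integral_mono_of_nonneg (Filter.Eventually.of_forall fun x => sq_nonneg _)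
      ((hc _).add (hphi.integrableOn.const_mul _)) (Filter.Eventually.of_forall hpt)
  rw [integral_add (hc _) (hphi.integrableOn.const_mul _), integral_const_mul, hDphi,
    setIntegral_const, smul_eq_mul, measureReal_def] at hmono
  have h5 := mul_le_mul_of_nonneg_left hls (sq_nonneg L₄)
  have h6 : (volume D).toReal * (2 * L₃ ^ 2 + L₄ ^ 2 / Real.exp 1) =
      2 * L₃ ^ 2 * (volume D).toReal + 2 * L₄ ^ 2 * ((volume D).toReal / (2 * Real.exp 1)) := by
    field_simp
  linarith
end
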